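/- The set S is closed under reflections in its elements: for all v, w ∈ S, the vector w − 2⟨w,v⟩_ℝ·v (the reflection of w in the hyperplane orthogonal to the unit vector v) again belongs to S. -/

import Mathlib

noncomputable section
open Real Complex

namespace Triacontagonal

/-- The golden ratio. -/
def τ : ℝ := (1 + Real.sqrt 5) / 2

/-- The constant 3^(-1/2) * 5^(-1/4). -/
def k0 : ℝ := (3 : ℝ) ^ (-(1:ℝ)/2) * (5 : ℝ) ^ (-(1:ℝ)/4)

/-- `a` is the positive real with 2a² = 1 + 3^(-1/2)·5^(-1/4)·τ^(3/2). -/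
def a : ℝ := Real.sqrt ((1 + k0 * τ ^ ((3:ℝ)/2)) / 2)

/-- `b` is the positive real with 2b² = 1 + 3^(-1/2)·5^(-1/4)·τ^(-3/2). -/
def b : ℝ := Real.sqrt ((1 + k0 * τ ^ (-((3:ℝ)/2))) / 2)

/-- `c` is the positive real with 2c² = 1 - 3^(-1/2)·5^(-1/4)·τ^(-3/2). -/
def c : ℝ := Real.sqrt ((1 - k0 * τ ^ (-((3:ℝ)/2))) / 2)

/-- `d` is the positive real with 2d² = 1 - 3^(-1/2)·5^(-1/4)·τ^(3/2). -/
def d : ℝ := Real.sqrt ((1 - k0 * τ ^ ((3:ℝ)/2)) / 2)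

/-- `cc n = 2 cos(nπ/30)`. -/
def cc (n : ℤ) : ℝ := 2 * Real.cos (n * Real.pi / 30)

/-- `ω = exp(iπ/30)`, a primitive 60th root of unity. -/
def ω : ℂ := Complex.exp (Real.pi * Complex.I / 30)

def r1 : ℝ := a / cc 9
def r2 : ℝ := b / cc 9
def r3 : ℝ := c / cc 9
def r4 : ℝ := d / cc 9
def r5 : ℝ := a / cc 3
def r6 : ℝ := b / cc 3
def r7 : ℝ := c / cc 3
def r8 : ℝ := d / cc 3

/-- The eight cycles of 30 vectors each in ℂ⁴. -/
def A (n : Fin 30) : Fin 4 → ℂ :=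
  ![(r1 : ℂ) * ω ^ (2 * (n : ℕ)), (r4 : ℂ) * ω ^ (22 * (n : ℕ)),
    (r6 : ℂ) * ω ^ (14 * (n : ℕ) + 1), (r7 : ℂ) * ω ^ (26 * (n : ℕ) + 1)]

def B (n : Fin 30) : Fin 4 → ℂ :=
  ![(r2 : ℂ) * ω ^ (2 * (n : ℕ) + 29), (r3 : ℂ) * ω ^ (22 * (n : ℕ) + 19),
    -((r8 : ℂ) * ω ^ (14 * (n : ℕ) + 24)), -((r5 : ℂ) * ω ^ (26 * (n : ℕ) + 18))]

def C (n : Fin 30) : Fin 4 → ℂ :=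
  ![(r3 : ℂ) * ω ^ (2 * (n : ℕ) + 29), -((r2 : ℂ) * ω ^ (22 * (n : ℕ) + 19)),
    (r5 : ℂ) * ω ^ (14 * (n : ℕ) + 24), -((r8 : ℂ) * ω ^ (26 * (n : ℕ) + 18))]

def D (n : Fin 30) : Fin 4 → ℂ :=
  ![(r4 : ℂ) * ω ^ (2 * (n : ℕ)), -((r1 : ℂ) * ω ^ (22 * (n : ℕ))),
    (r7 : ℂ) * ω ^ (14 * (n : ℕ) + 1), -((r6 : ℂ) * ω ^ (26 * (n : ℕ) + 1))]

def E (n : Fin 30) : Fin 4 → ℂ :=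
  ![(r5 : ℂ) * ω ^ (2 * (n : ℕ)), (r8 : ℂ) * ω ^ (22 * (n : ℕ)),
    -((r2 : ℂ) * ω ^ (14 * (n : ℕ) + 1)), -((r3 : ℂ) * ω ^ (26 * (n : ℕ) + 1))]

def F (n : Fin 30) : Fin 4 → ℂ :=
  ![(r6 : ℂ) * ω ^ (2 * (n : ℕ) + 29), (r7 : ℂ) * ω ^ (22 * (n : ℕ) + 19),
    (r4 : ℂ) * ω ^ (14 * (n : ℕ) + 24), (r1 : ℂ) * ω ^ (26 * (n : ℕ) + 18)]

def G (n : Fin 30) : Fin 4 → ℂ :=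
  ![(r7 : ℂ) * ω ^ (2 * (n : ℕ) + 29), -((r6 : ℂ) * ω ^ (22 * (n : ℕ) + 19)),
    -((r1 : ℂ) * ω ^ (14 * (n : ℕ) + 24)), (r4 : ℂ) * ω ^ (26 * (n : ℕ) + 18)]

def H (n : Fin 30) : Fin 4 → ℂ :=
  ![(r8 : ℂ) * ω ^ (2 * (n : ℕ)), -((r5 : ℂ) * ω ^ (22 * (n : ℕ))),
    -((r3 : ℂ) * ω ^ (14 * (n : ℕ) + 1)), (r2 : ℂ) * ω ^ (26 * (n : ℕ) + 1)]

/-- The set of the 240 vectors. -/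
def S : Set (Fin 4 → ℂ) :=
  {v | ∃ n : Fin 30, v = A n ∨ v = B n ∨ v = C n ∨ v = D n ∨
    v = E n ∨ v = F n ∨ v = G n ∨ v = H n}

/-- The real inner product on ℂ⁴: ⟨v,w⟩_ℝ = Re(Σᵢ vᵢ · conj(wᵢ)). -/
def rinner (v w : Fin 4 → ℂ) : ℝ := (∑ i, v i * star (w i)).re

/-- The associated Euclidean norm. -/
def enorm (v : Fin 4 → ℂ) : ℝ := Real.sqrt (rinner v v)


def u : ℝ := 2 * Real.cos (Real.pi/30)

lemma u_bound : 0.0109 < 2 - u ∧ 2 - u < 0.011 := by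
  have h1 := Real.pi_gt_d6
  have h2 := Real.pi_lt_d6
  have hx : |Real.pi/30| ≤ 1 := by rw [abs_of_pos (by positivity)]; linarith
  have h := abs_le.1 (Real.cos_bound hx)
  rw [abs_of_pos (by positivity : (0:ℝ) < Real.pi/30)] at h
  have h3 : (Real.pi/30)^2 < 0.010967 := by nlinarith
  have h4 : (0.010966:ℝ) < (Real.pi/30)^2 := by nlinarith
  have h5 : (Real.pi/30)^4 < 0.000121 := by nlinarith
  unfold u
  constructor <;> linarith [h.1, h.2]

lemma cos3 : Real.cos (3 * (Real.pi/30)) = (u^3 - 3*u)/2 := by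
  rw [Real.cos_three_mul]; unfold u; ring

lemma cos9 : Real.cos (9 * (Real.pi/30)) = ((9)*u^1 + (-30)*u^3 + (27)*u^5 + (-9)*u^7 + (1)*u^9)/2 := by
  rw [show 9 * (Real.pi/30) = 3 * (3 * (Real.pi/30)) by ring, Real.cos_three_mul, cos3]; ring

lemma cos6 : Real.cos (Real.pi/5) = ((-2) + (9)*u^2 + (-6)*u^4 + (1)*u^6)/2 := by
  rw [show Real.pi/5 = 2 * (3 * (Real.pi/30)) by ring, Real.cos_two_mul, cos3]; ring

lemma hu : (1) + (-8)*u^2 + (14)*u^4 + (-7)*u^6 + (1)*u^8 = 0 := by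
  have h : Real.cos (Real.pi/3) = ((-2) + (25)*u^2 + (-50)*u^4 + (35)*u^6 + (-10)*u^8 + (1)*u^10)/2 := by
    have h9 := cos9
    have e : Real.pi/3 = 9 * (Real.pi/30) + Real.pi/30 := by ring
    have e' := Real.cos_add (9 * (Real.pi/30)) (Real.pi/30)
    have e2 := Real.cos_sub (9 * (Real.pi/30)) (Real.pi/30)
    have e8 : Real.cos (9 * (Real.pi/30) - Real.pi/30) = ((2) + (-16)*u^2 + (20)*u^4 + (-8)*u^6 + (1)*u^8)/2 := by
      rw [show 9 * (Real.pi/30) - Real.pi/30 = 2 * (2 * (2 * (Real.pi/30))) by ring, Real.cos_two_mul,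
        Real.cos_two_mul, Real.cos_two_mul]
      unfold u; ring
    rw [← e] at e'
    have : Real.cos (Real.pi/30) = u/2 := by unfold u; ring
    rw [this, h9] at e' e2
    linear_combination e' + e2 - e8
  rw [Real.cos_pi_div_three] at h
  have hb := u_bound
  have h3 : u^2 - 3 ≠ 0 := by nlinarith
  apply mul_left_cancel₀ h3
  linear_combination (-2) * h

lemma sqrt5 : Real.sqrt 5 = (-5) + (18)*u^2 + (-12)*u^4 + (2)*u^6 := by
  have h := cos6
  rw [Real.cos_pi_div_five] at h
  linear_combination 4 * h

lemma tau_u : τ = (-2) + (9)*u^2 + (-6)*u^4 + (1)*u^6 := by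
  unfold τ; rw [sqrt5]; ring

lemma tau_pos : 0 < τ := by unfold τ; positivity

lemma k0_pos : 0 < k0 := by unfold k0; positivity

lemma k0_sq : k0^2 * (3 * Real.sqrt 5) = 1 := by
  unfold k0
  have h1 : ((3:ℝ) ^ (-(1:ℝ)/2))^2 = 3⁻¹ := by
    rw [← Real.rpow_natCast, ← Real.rpow_mul (by norm_num), ← Real.rpow_neg_one]; norm_num
  have h2 : ((5:ℝ) ^ (-(1:ℝ)/4))^2 = (Real.sqrt 5)⁻¹ := by
    rw [← Real.rpow_natCast, ← Real.rpow_mul (by norm_num), Real.sqrt_eq_rpow, ← Real.rpow_neg (by norm_num)]; norm_num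
  rw [mul_pow, h1, h2]
  have : Real.sqrt 5 ≠ 0 := by positivity
  field_simp

lemma tb (k : ℕ) : 0 ≤ (2-u)^(k+1) ∧ (2-u)^(k+1) ≤ 0.011^(k+1) := by
  have := u_bound
  exact ⟨pow_nonneg (by linarith) _, pow_le_pow_left₀ (by linarith) this.2.le _⟩

def fT1 : ℝ := (1/5) + (-38/15)*u^2 + (26/15)*u^4 + (-4/15)*u^6

lemma fT1_pos : 0 < fT1 := by
  have h0 := u_bound
  have h1 := tb 1
  have h2 := tb 2
  have h3 := tb 3
  have h4 := tb 4
  have h5 := tb 5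
  have h6 := tb 6
  norm_num at h0 h1 h2 h3 h4 h5 h6
  unfold fT1
  ring_nf at h0 h1 h2 h3 h4 h5 h6 ⊢
  linarith

def fT2 : ℝ := (19/15) + (-44/15)*u^2 + (6/5)*u^4 + (-2/15)*u^6

lemma fT2_pos : 0 < fT2 := by
  have h0 := u_bound
  have h1 := tb 1
  have h2 := tb 2
  have h3 := tb 3
  have h4 := tb 4
  have h5 := tb 5
  have h6 := tb 6
  norm_num at h0 h1 h2 h3 h4 h5 h6
  unfold fT2
  ring_nf at h0 h1 h2 h3 h4 h5 h6 ⊢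
  linarith

def fQb : ℝ := (-7)*u^1 + (22)*u^3 + (-13)*u^5 + (2)*u^7

lemma fQb_pos : 0 < fQb := by
  have h0 := u_bound
  have h1 := tb 1
  have h2 := tb 2
  have h3 := tb 3
  have h4 := tb 4
  have h5 := tb 5
  have h6 := tb 6
  norm_num at h0 h1 h2 h3 h4 h5 h6
  unfold fQb
  ring_nf at h0 h1 h2 h3 h4 h5 h6 ⊢
  linarith

def fQc : ℝ := (-8)*u^3 + (6)*u^5 + (-1)*u^7

lemma fQc_pos : 0 < fQc := by
  have h0 := u_bound
  have h1 := tb 1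
  have h2 := tb 2
  have h3 := tb 3
  have h4 := tb 4
  have h5 := tb 5
  have h6 := tb 6
  norm_num at h0 h1 h2 h3 h4 h5 h6
  unfold fQc
  ring_nf at h0 h1 h2 h3 h4 h5 h6 ⊢
  linarith

def fQd : ℝ := (-8)*u^2 + (6)*u^4 + (-1)*u^6

lemma fQd_pos : 0 < fQd := by
  have h0 := u_bound
  have h1 := tb 1
  have h2 := tb 2
  have h3 := tb 3
  have h4 := tb 4
  have h5 := tb 5
  have h6 := tb 6
  norm_num at h0 h1 h2 h3 h4 h5 h6
  unfold fQd
  ring_nf at h0 h1 h2 h3 h4 h5 h6 ⊢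
  linarith


lemma T1_eq : k0 * τ ^ ((3:ℝ)/2) = fT1 := by
  have hp : 0 < k0 * τ ^ ((3:ℝ)/2) := mul_pos k0_pos (Real.rpow_pos_of_pos tau_pos _)
  refine (pow_left_inj₀ hp.le fT1_pos.le (two_ne_zero)).1 ?_
  have h1 : (τ ^ ((3:ℝ)/2))^2 = τ^3 := by
    rw [← Real.rpow_natCast, ← Real.rpow_mul tau_pos.le, ← Real.rpow_natCast]; norm_num
  have h5 : 3 * Real.sqrt 5 ≠ 0 := by positivity
  apply mul_right_cancel₀ h5
  have h6 : fT1 ^2 * (3 * Real.sqrt 5) = τ^3 := by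
    rw [tau_u, sqrt5, fT1]
    linear_combination ((37/5) + (-786/25)*u^2 + (3004/75)*u^4 + (-564/25)*u^6 + (147/25)*u^8 + (-43/75)*u^10) * hu
  rw [h6, mul_pow, h1]
  linear_combination τ^3 * k0_sq

lemma T2_eq : k0 * τ ^ (-((3:ℝ)/2)) = fT2 := by
  have hp : 0 < k0 * τ ^ (-((3:ℝ)/2)) := mul_pos k0_pos (Real.rpow_pos_of_pos tau_pos _)
  refine (pow_left_inj₀ hp.le fT2_pos.le (two_ne_zero)).1 ?_
  have h1 : (τ ^ (-((3:ℝ)/2)))^2 * τ^3 = 1 := by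
    rw [← Real.rpow_natCast, ← Real.rpow_mul tau_pos.le, ← Real.rpow_natCast, ← Real.rpow_add tau_pos]; norm_num
  have h5 : 3 * Real.sqrt 5 * τ^3 ≠ 0 := by have := tau_pos; positivity
  apply mul_right_cancel₀ h5
  have h6 : fT2 ^2 * (3 * Real.sqrt 5 * τ^3) = 1 := by
    rw [tau_u, sqrt5, fT2]
    linear_combination ((2873/15) + (-198884/75)*u^2 + (1199896/75)*u^4 + (-4056802/75)*u^6 + (8487263/75)*u^8 + (-2320007/15)*u^10 + (3593218/25)*u^12 + (-2335606/25)*u^14 + (1080014/25)*u^16 + (-1071644/75)*u^18 + (251692/75)*u^20 + (-40988/75)*u^22 + (176/3)*u^24 + (-56/15)*u^26 + (8/75)*u^28) * hu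
  rw [h6, mul_pow]
  linear_combination k0^2 * (3 * Real.sqrt 5) * h1 + k0_sq

lemma a_sq : a^2 = (3/5) + (-19/15)*u^2 + (13/15)*u^4 + (-2/15)*u^6 := by
  unfold a
  rw [T1_eq, Real.sq_sqrt (by have := fT1_pos; positivity), fT1]; ring

lemma b_eq : b = a * fQb := by
  unfold b a
  rw [T1_eq, T2_eq]
  have h : (1 + fT2)/2 = (1 + fT1)/2 * fQb^2 := by
    unfold fT2 fT1 fQb
    linear_combination ((17/15) + (-109/5)*u^2 + (286/5)*u^4 + (-923/15)*u^6 + (454/15)*u^8 + (-20/3)*u^10 + (8/15)*u^12) * hu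
  rw [h, Real.sqrt_mul (by have := fT1_pos; positivity), Real.sqrt_sq fQb_pos.le]

lemma c_eq : c = a * fQc := by
  unfold c a
  rw [T1_eq, T2_eq]
  have h : (1 - fT2)/2 = (1 + fT1)/2 * fQc^2 := by
    unfold fT2 fT1 fQc
    linear_combination ((-2/15) + (2/5)*u^2 + (67/15)*u^4 + (-137/15)*u^6 + (6)*u^8 + (-23/15)*u^10 + (2/15)*u^12) * hu
  rw [h, Real.sqrt_mul (by have := fT1_pos; positivity), Real.sqrt_sq fQc_pos.le]

lemma d_eq : d = a * fQd := by
  unfold d a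
  rw [T1_eq]
  have h : (1 - fT1)/2 = (1 + fT1)/2 * fQd^2 := by
    unfold fT1 fQd
    linear_combination ((2/5) + (67/15)*u^2 + (-137/15)*u^4 + (6)*u^6 + (-23/15)*u^8 + (2/15)*u^10) * hu
  rw [h, Real.sqrt_mul (by have := fT1_pos; positivity), Real.sqrt_sq fQd_pos.le]

lemma inv9 : (cc 9)⁻¹ = (13/5)*u^1 + (-43/5)*u^3 + (26/5)*u^5 + (-4/5)*u^7 := by
  apply inv_eq_of_mul_eq_one_left
  have : cc 9 = (9)*u^1 + (-30)*u^3 + (27)*u^5 + (-9)*u^7 + (1)*u^9 := by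
    unfold cc
    push_cast
    rw [mul_div_assoc, cos9]; ring
  rw [this]
  linear_combination ((-1) + (77/5)*u^2 + (-91/5)*u^4 + (34/5)*u^6 + (-4/5)*u^8) * hu

lemma inv3 : (cc 3)⁻¹ = (-14/5)*u^1 + (24/5)*u^3 + (-13/5)*u^5 + (2/5)*u^7 := by
  apply inv_eq_of_mul_eq_one_left
  have : cc 3 = (-3)*u^1 + (1)*u^3 := by
    unfold cc
    push_cast
    rw [mul_div_assoc, cos3]; ring
  rw [this]
  linear_combination ((-1) + (2/5)*u^2) * hu

lemma r1_eq : r1 = a * ((13/5)*u^1 + (-43/5)*u^3 + (26/5)*u^5 + (-4/5)*u^7) := by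
  unfold r1
  rw [div_eq_mul_inv, inv9]


lemma r2_eq : r2 = a * ((-1/5) + (-19/5)*u^2 + (13/5)*u^4 + (-2/5)*u^6) := by
  unfold r2
  rw [div_eq_mul_inv, inv9, b_eq, fQb]
  linear_combination a * ((1/5) + (-64/5)*u^2 + (48/5)*u^4 + (-8/5)*u^6) * hu

lemma r3_eq : r3 = a * ((-8/5) + (43/5)*u^2 + (-26/5)*u^4 + (4/5)*u^6) := by
  unfold r3
  rw [div_eq_mul_inv, inv9, c_eq, fQc]
  linear_combination a * ((8/5) + (21/5)*u^2 + (-22/5)*u^4 + (4/5)*u^6) * hu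

lemma r4_eq : r4 = a * ((-21/5)*u^1 + (86/5)*u^3 + (-52/5)*u^5 + (8/5)*u^7) := by
  unfold r4
  rw [div_eq_mul_inv, inv9, d_eq, fQd]
  linear_combination a * ((21/5)*u^1 + (-22/5)*u^3 + (4/5)*u^5) * hu

lemma r5_eq : r5 = a * ((-14/5)*u^1 + (24/5)*u^3 + (-13/5)*u^5 + (2/5)*u^7) := by
  unfold r5
  rw [div_eq_mul_inv, inv3]


lemma r6_eq : r6 = a * ((13/5) + (-43/5)*u^2 + (26/5)*u^4 + (-4/5)*u^6) := by
  unfold r6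
  rw [div_eq_mul_inv, inv3, b_eq, fQb]
  linear_combination a * ((-13/5) + (37/5)*u^2 + (-24/5)*u^4 + (4/5)*u^6) * hu

lemma r7_eq : r7 = a * ((-1/5) + (21/5)*u^2 + (-17/5)*u^4 + (3/5)*u^6) := by
  unfold r7
  rw [div_eq_mul_inv, inv3, c_eq, fQc]
  linear_combination a * ((1/5) + (-13/5)*u^2 + (11/5)*u^4 + (-2/5)*u^6) * hu

lemma r8_eq : r8 = a * ((13/5)*u^1 + (-3/5)*u^3 + (-4/5)*u^5 + (1/5)*u^7) := by
  unfold r8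
  rw [div_eq_mul_inv, inv3, d_eq, fQd]
  linear_combination a * ((-13/5)*u^1 + (11/5)*u^3 + (-2/5)*u^5) * hu

lemma star_ω : ω * star ω = 1 := by
  have h : ‖ω‖ = 1 := by
    unfold ω
    rw [show (Real.pi:ℂ) * Complex.I / 30 = ((Real.pi/30 : ℝ):ℂ) * Complex.I by push_cast; ring]
    exact Complex.norm_exp_ofReal_mul_I _
  have := Complex.mul_conj' ω
  rw [h] at this
  simpa using this

lemma ω_ne : ω ≠ 0 := by
  intro h
  have := star_ω
  simp [h] at this

lemma u_ω : (u:ℂ) * ω = ω^2 + 1 := by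
  have h : (u:ℂ) = ω + star ω := by
    have : star ω = Complex.exp (-(Real.pi/30 * Complex.I)) := by
      unfold ω
      rw [Complex.star_def, ← Complex.exp_conj]
      congr 1
      simp only [map_div₀, map_mul, Complex.conj_ofReal, Complex.conj_I, Complex.conj_ofNat]
      ring
    rw [this]
    unfold u ω
    push_cast
    rw [Complex.cos, show (Real.pi:ℂ) * Complex.I / 30 = Real.pi/30 * Complex.I by ring]
    ring_nf
  rw [h]
  linear_combination star_ω

lemma hΦ : (1) + (1)*ω^2 + (-1)*ω^6 + (-1)*ω^8 + (-1)*ω^10 + (1)*ω^14 + (1)*ω^16 = 0 := by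
  have h : (((1) + (-8)*u^2 + (14)*u^4 + (-7)*u^6 + (1)*u^8 : ℝ) : ℂ) = 0 := by rw [hu]; simp
  push_cast at h
  have e : ∀ k : ℕ, (u:ℂ)^k * ω^k = (ω^2+1)^k := fun k => by rw [← mul_pow, u_ω]
  linear_combination ω^8 * h - e 8 + 7 * ω^2 * e 6 - 14 * ω^4 * e 4 + 8 * ω^6 * e 2

lemma h30 : ω^30 + 1 = 0 := by
  linear_combination ((1) + (-1)*ω^2 + (1)*ω^4 + (1)*ω^10 + (-1)*ω^12 + (1)*ω^14) * hΦ

lemma eu (k : ℕ) : (u:ℂ)^k * ω^k = (ω^2+1)^k := by rw [← mul_pow, u_ω]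

lemma r1_w : (r1:ℂ) * ω^7 = a * ((-4/5) + (-2/5)*ω^2 + (3/5)*ω^4 + (4/5)*ω^6 + (4/5)*ω^8 + (3/5)*ω^10 + (-2/5)*ω^12 + (-4/5)*ω^14) := by
  rw [r1_eq]; push_cast
  linear_combination (a:ℂ) * ((13/5)*ω^6 * eu 1 + (-43/5)*ω^4 * eu 3 + (26/5)*ω^2 * eu 5 + (-4/5)*ω^0 * eu 7)

lemma r2_w : (r2:ℂ) * ω^7 = a * ((-2/5)*ω^1 + (1/5)*ω^3 + (3/5)*ω^5 + (-1/5)*ω^7 + (3/5)*ω^9 + (1/5)*ω^11 + (-2/5)*ω^13) := by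
  rw [r2_eq]; push_cast
  linear_combination (a:ℂ) * ((-19/5)*ω^5 * eu 2 + (13/5)*ω^3 * eu 4 + (-2/5)*ω^1 * eu 6)

lemma r3_w : (r3:ℂ) * ω^7 = a * ((4/5)*ω^1 + (-2/5)*ω^3 + (-1/5)*ω^5 + (2/5)*ω^7 + (-1/5)*ω^9 + (-2/5)*ω^11 + (4/5)*ω^13) := by
  rw [r3_eq]; push_cast
  linear_combination (a:ℂ) * ((43/5)*ω^5 * eu 2 + (-26/5)*ω^3 * eu 4 + (4/5)*ω^1 * eu 6)

lemma r4_w : (r4:ℂ) * ω^7 = a * ((8/5) + (4/5)*ω^2 + (-6/5)*ω^4 + (-3/5)*ω^6 + (-3/5)*ω^8 + (-6/5)*ω^10 + (4/5)*ω^12 + (8/5)*ω^14) := by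
  rw [r4_eq]; push_cast
  linear_combination (a:ℂ) * ((-21/5)*ω^6 * eu 1 + (86/5)*ω^4 * eu 3 + (-52/5)*ω^2 * eu 5 + (8/5)*ω^0 * eu 7)

lemma r5_w : (r5:ℂ) * ω^7 = a * ((2/5) + (1/5)*ω^2 + (1/5)*ω^4 + (-2/5)*ω^6 + (-2/5)*ω^8 + (1/5)*ω^10 + (1/5)*ω^12 + (2/5)*ω^14) := by
  rw [r5_eq]; push_cast
  linear_combination (a:ℂ) * ((-14/5)*ω^6 * eu 1 + (24/5)*ω^4 * eu 3 + (-13/5)*ω^2 * eu 5 + (2/5)*ω^0 * eu 7)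

lemma r6_w : (r6:ℂ) * ω^7 = a * ((-4/5)*ω^1 + (2/5)*ω^3 + (1/5)*ω^5 + (3/5)*ω^7 + (1/5)*ω^9 + (2/5)*ω^11 + (-4/5)*ω^13) := by
  rw [r6_eq]; push_cast
  linear_combination (a:ℂ) * ((-43/5)*ω^5 * eu 2 + (26/5)*ω^3 * eu 4 + (-4/5)*ω^1 * eu 6)

lemma r7_w : (r7:ℂ) * ω^7 = a * ((3/5)*ω^1 + (1/5)*ω^3 + (-2/5)*ω^5 + (-1/5)*ω^7 + (-2/5)*ω^9 + (1/5)*ω^11 + (3/5)*ω^13) := by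
  rw [r7_eq]; push_cast
  linear_combination (a:ℂ) * ((21/5)*ω^5 * eu 2 + (-17/5)*ω^3 * eu 4 + (3/5)*ω^1 * eu 6)

lemma r8_w : (r8:ℂ) * ω^7 = a * ((1/5) + (3/5)*ω^2 + (-2/5)*ω^4 + (-1/5)*ω^6 + (-1/5)*ω^8 + (-2/5)*ω^10 + (3/5)*ω^12 + (1/5)*ω^14) := by
  rw [r8_eq]; push_cast
  linear_combination (a:ℂ) * ((13/5)*ω^6 * eu 1 + (-3/5)*ω^4 * eu 3 + (-4/5)*ω^2 * eu 5 + (1/5)*ω^0 * eu 7)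

lemma r1_sq : (r1:ℂ)^2 * ω^7 = (1/15)*ω^3 + (2/15)*ω^5 + (4/15)*ω^7 + (2/15)*ω^9 + (1/15)*ω^11 := by
  have h : r1^2 = (2/15) + (-2/15)*u^2 + (1/15)*u^4 := by
    rw [r1_eq, mul_pow, a_sq]
    linear_combination ((-2/15) + (1171/375)*u^2 + (-646/75)*u^4 + (716/75)*u^6 + (-24/5)*u^8 + (16/15)*u^10 + (-32/375)*u^12) * hu
  have h2 : (r1:ℂ)^2 = ((r1^2 : ℝ) : ℂ) := by push_cast; rfl
  rw [h2, h]; push_cast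
  linear_combination (-2/15)*ω^5 * eu 2 + (1/15)*ω^3 * eu 4

lemma r4_sq : (r4:ℂ)^2 * ω^7 = (1/5)*ω^1 + (-1/15)*ω^3 + (-2/15)*ω^5 + (2/15)*ω^7 + (-2/15)*ω^9 + (-1/15)*ω^11 + (1/5)*ω^13 := by
  have h : r4^2 = (-2/15) + (29/15)*u^2 + (-19/15)*u^4 + (1/5)*u^6 := by
    rw [r4_eq, mul_pow, a_sq]
    linear_combination ((2/15) + (3644/375)*u^2 + (-2392/75)*u^4 + (944/25)*u^6 + (-96/5)*u^8 + (64/15)*u^10 + (-128/375)*u^12) * hu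
  have h2 : (r4:ℂ)^2 = ((r4^2 : ℝ) : ℂ) := by push_cast; rfl
  rw [h2, h]; push_cast
  linear_combination (29/15)*ω^5 * eu 2 + (-19/15)*ω^3 * eu 4 + (1/5)*ω^1 * eu 6

lemma r6_sq : (r6:ℂ)^2 * ω^7 = (-2/15)*ω^1 + (2/15)*ω^3 + (-1/15)*ω^5 + (4/15)*ω^7 + (-1/15)*ω^9 + (2/15)*ω^11 + (-2/15)*ω^13 := by
  have h : r6^2 = (14/15) + (-9/5)*u^2 + (14/15)*u^4 + (-2/15)*u^6 := by
    rw [r6_eq, mul_pow, a_sq]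
    linear_combination ((1171/375) + (-646/75)*u^2 + (716/75)*u^4 + (-24/5)*u^6 + (16/15)*u^8 + (-32/375)*u^10) * hu
  have h2 : (r6:ℂ)^2 = ((r6^2 : ℝ) : ℂ) := by push_cast; rfl
  rw [h2, h]; push_cast
  linear_combination (-9/5)*ω^5 * eu 2 + (14/15)*ω^3 * eu 4 + (-2/15)*ω^1 * eu 6

lemma r7_sq : (r7:ℂ)^2 * ω^7 = (-1/15)*ω^1 + (-2/15)*ω^3 + (1/15)*ω^5 + (1/3)*ω^7 + (1/15)*ω^9 + (-2/15)*ω^11 + (-1/15)*ω^13 := by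
  have h : r7^2 = (1/15) + (4/15)*u^4 + (-1/15)*u^6 := by
    rw [r7_eq, mul_pow, a_sq]
    linear_combination ((-16/375) + (-7/5)*u^2 + (202/75)*u^4 + (-142/75)*u^6 + (13/25)*u^8 + (-6/125)*u^10) * hu
  have h2 : (r7:ℂ)^2 = ((r7^2 : ℝ) : ℂ) := by push_cast; rfl
  rw [h2, h]; push_cast
  linear_combination (4/15)*ω^3 * eu 4 + (-1/15)*ω^1 * eu 6

lemma eB0 : ((r2:ℂ) * ω^29) = ((1)*(ω^2)^0 + (-1)*(ω^2)^2 + (-1)*(ω^2)^3 + (-1)*(ω^2)^5 + (1)*(ω^2)^6 + (1)*(ω^2)^7) * ((r1:ℂ) * ω^0) := by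
  apply mul_right_cancel₀ (pow_ne_zero 7 ω_ne)
  linear_combination (1)*ω^29 * r2_w - ((1)*(ω^2)^0 + (-1)*(ω^2)^2 + (-1)*(ω^2)^3 + (-1)*(ω^2)^5 + (1)*(ω^2)^6 + (1)*(ω^2)^7)*ω^0 * r1_w + (a:ℂ) * (((-2/5) + (1/5)*ω^2 + (3/5)*ω^4 + (-1/5)*ω^6 + (3/5)*ω^8 + (1/5)*ω^10 + (-2/5)*ω^12) * h30 + ((6/5) + (-1)*ω^2 + (-1)*ω^4 + (2/5)*ω^6 + (-7/5)*ω^8 + (2/5)*ω^10 + (4/5)*ω^12) * hΦ)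

lemma eB1 : ((r3:ℂ) * ω^19) = ((1)*(ω^22)^0 + (-1)*(ω^22)^2 + (-1)*(ω^22)^3 + (-1)*(ω^22)^5 + (1)*(ω^22)^6 + (1)*(ω^22)^7) * ((r4:ℂ) * ω^0) := by
  apply mul_right_cancel₀ (pow_ne_zero 7 ω_ne)
  linear_combination (1)*ω^19 * r3_w - ((1)*(ω^22)^0 + (-1)*(ω^22)^2 + (-1)*(ω^22)^3 + (-1)*(ω^22)^5 + (1)*(ω^22)^6 + (1)*(ω^22)^7)*ω^0 * r4_w + (a:ℂ) * (((4/5) + (-16/5)*ω^4 + (-12/5)*ω^6 + (2/5)*ω^8 + (9/5)*ω^10 + (14/5)*ω^12 + (21/5)*ω^14 + (-21/5)*ω^18 + (-6/5)*ω^20 + (-1)*ω^22 + (-8/5)*ω^24 + (9/5)*ω^26 + (1)*ω^28 + (-6/5)*ω^30 + (4/5)*ω^32 + (16/5)*ω^34 + (12/5)*ω^36 + (-2/5)*ω^38 + (-9/5)*ω^40 + (-14/5)*ω^42 + (-13/5)*ω^44 + (4/5)*ω^46 + (3)*ω^48 + (3/5)*ω^50 + (2/5)*ω^52 + (2/5)*ω^54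 + (-1)*ω^56 + (3/5)*ω^58 + (6/5)*ω^60 + (-4/5)*ω^62 + (-16/5)*ω^64 + (-4/5)*ω^66 + (6/5)*ω^68 + (3/5)*ω^70 + (11/5)*ω^72 + (2)*ω^74 + (-2)*ω^76 + (-11/5)*ω^78 + (1)*ω^80 + (-2/5)*ω^82 + (-2/5)*ω^84 + (1)*ω^86 + (-3/5)*ω^88 + (-6/5)*ω^90 + (4/5)*ω^92 + (16/5)*ω^94 + (4/5)*ω^96 + (-6/5)*ω^98 + (-3/5)*ω^100 + (-11/5)*ω^102 + (-2)*ω^104 + (2)*ω^106 + (11/5)*ω^108 + (3/5)*ω^110 + (6/5)*ω^112 + (-4/5)*ω^114 + (-8/5)*ω^116 + (-8/5)*ω^124 + (-4/5)*ω^126 + (6/5)*ω^128 + (3/5)*ω^130 + (3/5)*ω^132 + (6/5)*ω^134 + (-4/5)*ω^136 + (-8/5)*ω^138) * h30 + ((-12/5) + (8/5)*ω^2 + (14/5)*ω^4 + (-11/5)*ω^6 + (8/5)*ω^8 + (-1/5)*ω^10 + (-6/5)*ω^12) * hΦ)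

lemma eB2 : -((r8:ℂ) * ω^24) = ((1)*(ω^14)^0 + (-1)*(ω^14)^2 + (-1)*(ω^14)^3 + (-1)*(ω^14)^5 + (1)*(ω^14)^6 + (1)*(ω^14)^7) * ((r6:ℂ) * ω^1) := by
  apply mul_right_cancel₀ (pow_ne_zero 7 ω_ne)
  linear_combination (-1)*ω^24 * r8_w - ((1)*(ω^14)^0 + (-1)*(ω^14)^2 + (-1)*(ω^14)^3 + (-1)*(ω^14)^5 + (1)*(ω^14)^6 + (1)*(ω^14)^7)*ω^1 * r6_w + (a:ℂ) * (((-4/5) + (2/5)*ω^4 + (-2/5)*ω^6 + (4/5)*ω^8 + (6/5)*ω^10 + (-2/5)*ω^12 + (-7/5)*ω^14 + (-2/5)*ω^16 + (-3/5)*ω^18 + (3/5)*ω^22 + (6/5)*ω^24 + (-8/5)*ω^26 + (2/5)*ω^28 + (1/5)*ω^30 + (3/5)*ω^32 + (1/5)*ω^34 + (2/5)*ω^36 + (-4/5)*ω^38 + (-4/5)*ω^40 + (-2/5)*ω^42 + (3/5)*ω^44 + (4/5)*ω^46 + (4/5)*ω^48 + (3/5)*ω^50 + (-2/5)*ω^52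 + (-4/5)*ω^54 + (4/5)*ω^56 + (-2/5)*ω^58 + (-1/5)*ω^60 + (-3/5)*ω^62 + (-1/5)*ω^64 + (-2/5)*ω^66 + (4/5)*ω^68 + (4/5)*ω^70 + (-2/5)*ω^72 + (-1/5)*ω^74 + (-3/5)*ω^76 + (-1/5)*ω^78 + (-2/5)*ω^80 + (4/5)*ω^82) * h30 + ((4/5) + (-4/5)*ω^4 + (9/5)*ω^6 + (-12/5)*ω^8 + (1)*ω^10) * hΦ)

lemma eB3 : -((r5:ℂ) * ω^18) = ((1)*(ω^26)^0 + (-1)*(ω^26)^2 + (-1)*(ω^26)^3 + (-1)*(ω^26)^5 + (1)*(ω^26)^6 + (1)*(ω^26)^7) * ((r7:ℂ) * ω^1) := by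
  apply mul_right_cancel₀ (pow_ne_zero 7 ω_ne)
  linear_combination (-1)*ω^18 * r5_w - ((1)*(ω^26)^0 + (-1)*(ω^26)^2 + (-1)*(ω^26)^3 + (-1)*(ω^26)^5 + (1)*(ω^26)^6 + (1)*(ω^26)^7)*ω^1 * r7_w + (a:ℂ) * (((1/5) + (3/5)*ω^2 + (2/5)*ω^4 + (-2/5)*ω^6 + (-1)*ω^8 + (-2/5)*ω^10 + (-3/5)*ω^12 + (1/5)*ω^14 + (7/5)*ω^16 + (-4/5)*ω^20 + (-2/5)*ω^22 + (2/5)*ω^24 + (2/5)*ω^26 + (-2/5)*ω^30 + (-1)*ω^32 + (-2/5)*ω^34 + (2/5)*ω^36 + (1)*ω^38 + (2/5)*ω^40 + (3/5)*ω^42 + (-1/5)*ω^44 + (-7/5)*ω^46 + (4/5)*ω^50 + (2/5)*ω^52 + (1/5)*ω^54 + (-1/5)*ω^56 + (-2/5)*ω^58 + (1/5)*ω^60 + (3/5)*ω^62 + (3/5)*ω^64 + (1/5)*ω^66 + (-1)*ω^68 + (-2/5)*ω^70 + (-3/5)*ω^72 + (1/5)*ω^74 + (7/5)*ω^76 + (-1/5)*ω^80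 + (-1/5)*ω^82 + (-3/5)*ω^84 + (-3/5)*ω^94 + (-1/5)*ω^96 + (1)*ω^98 + (2/5)*ω^100 + (3/5)*ω^102 + (-1/5)*ω^104 + (-7/5)*ω^106 + (1/5)*ω^110 + (1/5)*ω^112 + (3/5)*ω^114 + (3/5)*ω^124 + (1/5)*ω^126 + (-1)*ω^128 + (-2/5)*ω^130 + (2/5)*ω^134 + (1)*ω^136 + (-1/5)*ω^138 + (-3/5)*ω^140 + (-3/5)*ω^154 + (-1/5)*ω^156 + (2/5)*ω^158 + (1/5)*ω^160 + (2/5)*ω^162 + (-1/5)*ω^164 + (-3/5)*ω^166) * h30 + ((-1/5) + (-1)*ω^2 + (2/5)*ω^4 + (1/5)*ω^6 + (-1/5)*ω^8 + (1/5)*ω^10 + (-1/5)*ω^12) * hΦ)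

lemma eC0 : ((r3:ℂ) * ω^29) = ((-1)*(ω^2)^0 + (-1)*(ω^2)^1 + (1)*(ω^2)^2 + (1)*(ω^2)^5 + (-1)*(ω^2)^7) * ((r1:ℂ) * ω^0) := by
  apply mul_right_cancel₀ (pow_ne_zero 7 ω_ne)
  linear_combination (1)*ω^29 * r3_w - ((-1)*(ω^2)^0 + (-1)*(ω^2)^1 + (1)*(ω^2)^2 + (1)*(ω^2)^5 + (-1)*(ω^2)^7)*ω^0 * r1_w + (a:ℂ) * (((4/5) + (-2/5)*ω^2 + (-1/5)*ω^4 + (2/5)*ω^6 + (-1/5)*ω^8 + (-2/5)*ω^10 + (4/5)*ω^12) * h30 + ((-8/5) + (4/5)*ω^2 + (2/5)*ω^4 + (-3/5)*ω^6 + (1)*ω^8 + (2/5)*ω^10 + (-4/5)*ω^12) * hΦ)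

lemma eC1 : -((r2:ℂ) * ω^19) = ((-1)*(ω^22)^0 + (-1)*(ω^22)^1 + (1)*(ω^22)^2 + (1)*(ω^22)^5 + (-1)*(ω^22)^7) * ((r4:ℂ) * ω^0) := by
  apply mul_right_cancel₀ (pow_ne_zero 7 ω_ne)
  linear_combination (-1)*ω^19 * r2_w - ((-1)*(ω^22)^0 + (-1)*(ω^22)^1 + (1)*(ω^22)^2 + (1)*(ω^22)^5 + (-1)*(ω^22)^7)*ω^0 * r4_w + (a:ℂ) * (((-2) + (4)*ω^4 + (12/5)*ω^6 + (-6/5)*ω^8 + (-3/5)*ω^10 + (-3/5)*ω^12 + (-14/5)*ω^14 + (14/5)*ω^18 + (-1)*ω^20 + (-1/5)*ω^22 + (12/5)*ω^24 + (-1/5)*ω^26 + (-1)*ω^28 + (6/5)*ω^30 + (-4/5)*ω^32 + (-16/5)*ω^34 + (-4/5)*ω^36 + (6/5)*ω^38 + (3/5)*ω^40 + (3/5)*ω^42 + (6/5)*ω^44 + (-4/5)*ω^46 + (-8/5)*ω^48 + (8/5)*ω^50 + (4/5)*ω^52 + (-6/5)*ω^54 + (-3/5)*ω^56 + (-3/5)*ω^58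 + (-6/5)*ω^60 + (4/5)*ω^62 + (16/5)*ω^64 + (4/5)*ω^66 + (-6/5)*ω^68 + (-3/5)*ω^70 + (-3/5)*ω^72 + (-6/5)*ω^74 + (4/5)*ω^76 + (8/5)*ω^78 + (-8/5)*ω^80 + (-4/5)*ω^82 + (6/5)*ω^84 + (3/5)*ω^86 + (3/5)*ω^88 + (6/5)*ω^90 + (-4/5)*ω^92 + (-16/5)*ω^94 + (-4/5)*ω^96 + (6/5)*ω^98 + (3/5)*ω^100 + (3/5)*ω^102 + (6/5)*ω^104 + (-4/5)*ω^106 + (-8/5)*ω^108 + (8/5)*ω^124 + (4/5)*ω^126 + (-6/5)*ω^128 + (-3/5)*ω^130 + (-3/5)*ω^132 + (-6/5)*ω^134 + (4/5)*ω^136 + (8/5)*ω^138) * h30 + ((18/5) + (-14/5)*ω^2 + (-12/5)*ω^4 + (3)*ω^6 + (-8/5)*ω^8 + (-3/5)*ω^10 + (-1/5)*ω^12) * hΦ)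

lemma eC2 : ((r5:ℂ) * ω^24) = ((-1)*(ω^14)^0 + (-1)*(ω^14)^1 + (1)*(ω^14)^2 + (1)*(ω^14)^5 + (-1)*(ω^14)^7) * ((r6:ℂ) * ω^1) := by
  apply mul_right_cancel₀ (pow_ne_zero 7 ω_ne)
  linear_combination (1)*ω^24 * r5_w - ((-1)*(ω^14)^0 + (-1)*(ω^14)^1 + (1)*(ω^14)^2 + (1)*(ω^14)^5 + (-1)*(ω^14)^7)*ω^1 * r6_w + (a:ℂ) * (((2/5) + (-4/5)*ω^2 + (-2/5)*ω^6 + (1/5)*ω^8 + (-6/5)*ω^10 + (2/5)*ω^12 + (3/5)*ω^14 + (4/5)*ω^16 + (4/5)*ω^18 + (3/5)*ω^20 + (-2/5)*ω^22 + (-4/5)*ω^24 + (4/5)*ω^40 + (2/5)*ω^42 + (-3/5)*ω^44 + (-4/5)*ω^46 + (-4/5)*ω^48 + (-3/5)*ω^50 + (2/5)*ω^52 + (4/5)*ω^54 + (-4/5)*ω^70 + (2/5)*ω^72 + (1/5)*ω^74 + (3/5)*ω^76 + (1/5)*ω^78 + (2/5)*ω^80 + (-4/5)*ω^82) * h30 +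 ((-2/5) + (2/5)*ω^2 + (1/5)*ω^6 + (1/5)*ω^8 + (6/5)*ω^10 + (-3/5)*ω^12) * hΦ)

lemma eC3 : -((r8:ℂ) * ω^18) = ((-1)*(ω^26)^0 + (-1)*(ω^26)^1 + (1)*(ω^26)^2 + (1)*(ω^26)^5 + (-1)*(ω^26)^7) * ((r7:ℂ) * ω^1) := by
  apply mul_right_cancel₀ (pow_ne_zero 7 ω_ne)
  linear_combination (-1)*ω^18 * r8_w - ((-1)*(ω^26)^0 + (-1)*(ω^26)^1 + (1)*(ω^26)^2 + (1)*(ω^26)^5 + (-1)*(ω^26)^7)*ω^1 * r7_w + (a:ℂ) * (((-3/5) + (-1)*ω^2 + (-3/5)*ω^4 + (3/5)*ω^8 + (4/5)*ω^10 + (1)*ω^12 + (-1)*ω^16 + (-1/5)*ω^18 + (-2/5)*ω^20 + (1/5)*ω^22 + (-1/5)*ω^26 + (2/5)*ω^28 + (1/5)*ω^30 + (2/5)*ω^32 + (2/5)*ω^34 + (-2/5)*ω^36 + (-2/5)*ω^38 + (-1/5)*ω^40 + (-1)*ω^42 + (1)*ω^46 + (1/5)*ω^48 + (2/5)*ω^50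 + (-1/5)*ω^52 + (-3/5)*ω^54 + (-3/5)*ω^64 + (-1/5)*ω^66 + (2/5)*ω^68 + (1/5)*ω^70 + (1)*ω^72 + (-1)*ω^76 + (-1/5)*ω^78 + (-2/5)*ω^80 + (1/5)*ω^82 + (3/5)*ω^84 + (3/5)*ω^94 + (1/5)*ω^96 + (-2/5)*ω^98 + (-1/5)*ω^100 + (-1)*ω^102 + (1)*ω^106 + (1/5)*ω^108 + (2/5)*ω^110 + (-1/5)*ω^112 + (-3/5)*ω^114 + (-3/5)*ω^124 + (-1/5)*ω^126 + (2/5)*ω^128 + (1/5)*ω^130 + (2/5)*ω^132 + (-1/5)*ω^134 + (-3/5)*ω^136 + (3/5)*ω^154 + (1/5)*ω^156 + (-2/5)*ω^158 + (-1/5)*ω^160 + (-2/5)*ω^162 + (1/5)*ω^164 + (3/5)*ω^166) * h30 + ((3/5) + (1)*ω^2 + (-1/5)*ω^4 + (2/5)*ω^6 + (2/5)*ω^8 + (-1/5)*ω^10 + (3/5)*ω^12) * hΦ)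

lemma eD0 : ((r4:ℂ) * ω^0) = ((-1)*(ω^2)^0 + (1)*(ω^2)^1 + (1)*(ω^2)^4 + (-1)*(ω^2)^6) * ((r1:ℂ) * ω^0) := by
  apply mul_right_cancel₀ (pow_ne_zero 7 ω_ne)
  linear_combination (1)*ω^0 * r4_w - ((-1)*(ω^2)^0 + (1)*(ω^2)^1 + (1)*(ω^2)^4 + (-1)*(ω^2)^6)*ω^0 * r1_w + (a:ℂ) * ((0) * h30 + ((4/5) + (2/5)*ω^2 + (-3/5)*ω^4 + (1)*ω^6 + (2/5)*ω^8 + (-4/5)*ω^10) * hΦ)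

lemma eD1 : -((r1:ℂ) * ω^0) = ((-1)*(ω^22)^0 + (1)*(ω^22)^1 + (1)*(ω^22)^4 + (-1)*(ω^22)^6) * ((r4:ℂ) * ω^0) := by
  apply mul_right_cancel₀ (pow_ne_zero 7 ω_ne)
  linear_combination (-1)*ω^0 * r1_w - ((-1)*(ω^22)^0 + (1)*(ω^22)^1 + (1)*(ω^22)^4 + (-1)*(ω^22)^6)*ω^0 * r4_w + (a:ℂ) * (((-1/5) + (12/5)*ω^2 + (-1/5)*ω^4 + (-1)*ω^6 + (6/5)*ω^8 + (-4/5)*ω^10 + (-16/5)*ω^12 + (-4/5)*ω^14 + (6/5)*ω^16 + (3/5)*ω^18 + (3/5)*ω^20 + (6/5)*ω^22 + (-4/5)*ω^24 + (-8/5)*ω^26 + (8/5)*ω^28 + (4/5)*ω^30 + (-6/5)*ω^32 + (-3/5)*ω^34 + (-3/5)*ω^36 + (-6/5)*ω^38 + (4/5)*ω^40 + (16/5)*ω^42 + (4/5)*ω^44 + (-6/5)*ω^46 + (-3/5)*ω^48 + (-3/5)*ω^50 + (-6/5)*ω^52 + (4/5)*ω^54 + (8/5)*ω^56 + (-8/5)*ω^58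 + (-4/5)*ω^60 + (6/5)*ω^62 + (3/5)*ω^64 + (3/5)*ω^66 + (6/5)*ω^68 + (-4/5)*ω^70 + (-16/5)*ω^72 + (-4/5)*ω^74 + (6/5)*ω^76 + (3/5)*ω^78 + (3/5)*ω^80 + (6/5)*ω^82 + (-4/5)*ω^84 + (-8/5)*ω^86 + (8/5)*ω^102 + (4/5)*ω^104 + (-6/5)*ω^106 + (-3/5)*ω^108 + (-3/5)*ω^110 + (-6/5)*ω^112 + (4/5)*ω^114 + (8/5)*ω^116) * h30 + ((13/5) + (-19/5)*ω^2 + (11/5)*ω^4 + (-19/5)*ω^8 + (19/5)*ω^10 + (-1)*ω^12) * hΦ)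

lemma eD2 : ((r7:ℂ) * ω^1) = ((-1)*(ω^14)^0 + (1)*(ω^14)^1 + (1)*(ω^14)^4 + (-1)*(ω^14)^6) * ((r6:ℂ) * ω^1) := by
  apply mul_right_cancel₀ (pow_ne_zero 7 ω_ne)
  linear_combination (1)*ω^1 * r7_w - ((-1)*(ω^14)^0 + (1)*(ω^14)^1 + (1)*(ω^14)^4 + (-1)*(ω^14)^6)*ω^1 * r6_w + (a:ℂ) * (((3/5) + (4/5)*ω^2 + (4/5)*ω^4 + (3/5)*ω^6 + (-2/5)*ω^8 + (-4/5)*ω^10 + (4/5)*ω^26 + (2/5)*ω^28 + (-3/5)*ω^30 + (-4/5)*ω^32 + (-4/5)*ω^34 + (-3/5)*ω^36 + (2/5)*ω^38 + (4/5)*ω^40 + (-4/5)*ω^56 + (2/5)*ω^58 + (1/5)*ω^60 + (3/5)*ω^62 + (1/5)*ω^64 + (2/5)*ω^66 + (-4/5)*ω^68) * h30 + ((-3/5) + (-2/5)*ω^2 + (1/5)*ω^4 + (-8/5)*ω^6 + (7/5)*ω^8 + (-8/5)*ω^10 + (2/5)*ω^12) * hΦ)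

lemma eD3 : -((r6:ℂ) * ω^1) = ((-1)*(ω^26)^0 + (1)*(ω^26)^1 + (1)*(ω^26)^4 + (-1)*(ω^26)^6) * ((r7:ℂ) * ω^1) := by
  apply mul_right_cancel₀ (pow_ne_zero 7 ω_ne)
  linear_combination (-1)*ω^1 * r6_w - ((-1)*(ω^26)^0 + (1)*(ω^26)^1 + (1)*(ω^26)^4 + (-1)*(ω^26)^6)*ω^1 * r7_w + (a:ℂ) * (((-1/5) + (2/5)*ω^2 + (1/5)*ω^4 + (2/5)*ω^6 + (2/5)*ω^8 + (-2/5)*ω^10 + (-2/5)*ω^12 + (-1/5)*ω^14 + (-1)*ω^16 + (1)*ω^20 + (1/5)*ω^22 + (2/5)*ω^24 + (-1/5)*ω^26 + (-3/5)*ω^28 + (-3/5)*ω^38 + (-1/5)*ω^40 + (2/5)*ω^42 + (1/5)*ω^44 + (1)*ω^46 + (-1)*ω^50 + (-1/5)*ω^52 + (-2/5)*ω^54 + (1/5)*ω^56 + (3/5)*ω^58 + (3/5)*ω^68 + (1/5)*ω^70 + (-2/5)*ω^72 + (-1/5)*ω^74 + (-1)*ω^76 + (1)*ω^80 + (1/5)*ω^82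 + (2/5)*ω^84 + (-1/5)*ω^86 + (-3/5)*ω^88 + (-3/5)*ω^98 + (-1/5)*ω^100 + (2/5)*ω^102 + (1/5)*ω^104 + (2/5)*ω^106 + (-1/5)*ω^108 + (-3/5)*ω^110 + (3/5)*ω^128 + (1/5)*ω^130 + (-2/5)*ω^132 + (-1/5)*ω^134 + (-2/5)*ω^136 + (1/5)*ω^138 + (3/5)*ω^140) * h30 + ((1/5) + (4/5)*ω^2 + (-6/5)*ω^4 + (2/5)*ω^6 + (-3/5)*ω^8 + (1/5)*ω^10) * hΦ)

lemma eE0 : ((r5:ℂ) * ω^0) = ((-1)*(ω^2)^0 + (1)*(ω^2)^2 + (1)*(ω^2)^3 + (-1)*(ω^2)^7) * ((r1:ℂ) * ω^0) := by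
  apply mul_right_cancel₀ (pow_ne_zero 7 ω_ne)
  linear_combination (1)*ω^0 * r5_w - ((-1)*(ω^2)^0 + (1)*(ω^2)^2 + (1)*(ω^2)^3 + (-1)*(ω^2)^7)*ω^0 * r1_w + (a:ℂ) * ((0) * h30 + ((-2/5) + (1/5)*ω^2 + (7/5)*ω^4 + (-1/5)*ω^6 + (1/5)*ω^8 + (2/5)*ω^10 + (-4/5)*ω^12) * hΦ)

lemma eE1 : ((r8:ℂ) * ω^0) = ((-1)*(ω^22)^0 + (1)*(ω^22)^2 + (1)*(ω^22)^3 + (-1)*(ω^22)^7) * ((r4:ℂ) * ω^0) := by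
  apply mul_right_cancel₀ (pow_ne_zero 7 ω_ne)
  linear_combination (1)*ω^0 * r8_w - ((-1)*(ω^22)^0 + (1)*(ω^22)^2 + (1)*(ω^22)^3 + (-1)*(ω^22)^7)*ω^0 * r4_w + (a:ℂ) * (((8/5)*ω^4 + (12/5)*ω^6 + (-2/5)*ω^8 + (-9/5)*ω^10 + (-6/5)*ω^12 + (-17/5)*ω^14 + (-6/5)*ω^16 + (18/5)*ω^18 + (11/5)*ω^20 + (3/5)*ω^22 + (6/5)*ω^24 + (-4/5)*ω^26 + (-8/5)*ω^28 + (-8/5)*ω^34 + (-12/5)*ω^36 + (2/5)*ω^38 + (9/5)*ω^40 + (6/5)*ω^42 + (9/5)*ω^44 + (2/5)*ω^46 + (-12/5)*ω^48 + (-8/5)*ω^50 + (8/5)*ω^64 + (4/5)*ω^66 + (-6/5)*ω^68 + (-3/5)*ω^70 + (-3/5)*ω^72 + (-6/5)*ω^74 + (4/5)*ω^76 + (8/5)*ω^78 + (-8/5)*ω^94 + (-4/5)*ω^96 + (6/5)*ω^98 + (3/5)*ω^100 + (3/5)*ω^102 + (6/5)*ω^104 + (-4/5)*ω^106 + (-8/5)*ω^108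 + (8/5)*ω^124 + (4/5)*ω^126 + (-6/5)*ω^128 + (-3/5)*ω^130 + (-3/5)*ω^132 + (-6/5)*ω^134 + (4/5)*ω^136 + (8/5)*ω^138) * h30 + ((9/5) + (-2/5)*ω^2 + (-14/5)*ω^4 + (7/5)*ω^6 + (-2/5)*ω^8 + (-4/5)*ω^10 + (8/5)*ω^12) * hΦ)

lemma eE2 : -((r2:ℂ) * ω^1) = ((-1)*(ω^14)^0 + (1)*(ω^14)^2 + (1)*(ω^14)^3 + (-1)*(ω^14)^7) * ((r6:ℂ) * ω^1) := by
  apply mul_right_cancel₀ (pow_ne_zero 7 ω_ne)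
  linear_combination (-1)*ω^1 * r2_w - ((-1)*(ω^14)^0 + (1)*(ω^14)^2 + (1)*(ω^14)^3 + (-1)*(ω^14)^7)*ω^1 * r6_w + (a:ℂ) * (((4/5) + (-2/5)*ω^2 + (-1/5)*ω^4 + (-3/5)*ω^6 + (-1/5)*ω^8 + (-6/5)*ω^10 + (6/5)*ω^12 + (1)*ω^14 + (1/5)*ω^16 + (-1/5)*ω^20 + (-1)*ω^22 + (-2/5)*ω^24 + (4/5)*ω^26 + (4/5)*ω^40 + (-2/5)*ω^42 + (-1/5)*ω^44 + (-3/5)*ω^46 + (-1/5)*ω^48 + (-2/5)*ω^50 + (4/5)*ω^52 + (-4/5)*ω^70 + (2/5)*ω^72 + (1/5)*ω^74 + (3/5)*ω^76 + (1/5)*ω^78 + (2/5)*ω^80 + (-4/5)*ω^82) * h30 + ((-4/5) + (4/5)*ω^2 + (-2/5)*ω^4 + (-1/5)*ω^6 + (6/5)*ω^8 + (-4/5)*ω^10) * hΦ)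

lemma eE3 : -((r3:ℂ) * ω^1) = ((-1)*(ω^26)^0 + (1)*(ω^26)^2 + (1)*(ω^26)^3 + (-1)*(ω^26)^7) * ((r7:ℂ) * ω^1) := by
  apply mul_right_cancel₀ (pow_ne_zero 7 ω_ne)
  linear_combination (-1)*ω^1 * r3_w - ((-1)*(ω^26)^0 + (1)*(ω^26)^2 + (1)*(ω^26)^3 + (-1)*(ω^26)^7)*ω^1 * r7_w + (a:ℂ) * (((-2/5) + (-1)*ω^2 + (-2/5)*ω^4 + (2/5)*ω^6 + (2/5)*ω^8 + (1/5)*ω^10 + (2/5)*ω^12 + (-1/5)*ω^14 + (-3/5)*ω^16 + (3/5)*ω^20 + (1/5)*ω^22 + (-1)*ω^24 + (-2/5)*ω^26 + (2/5)*ω^30 + (1)*ω^32 + (2/5)*ω^34 + (-2/5)*ω^36 + (-2/5)*ω^38 + (-1/5)*ω^40 + (-2/5)*ω^42 + (1/5)*ω^44 + (3/5)*ω^46 + (-3/5)*ω^50 + (-1/5)*ω^52 + (2/5)*ω^54 + (1/5)*ω^56 + (2/5)*ω^58 + (-1/5)*ω^60 + (-3/5)*ω^62 + (-3/5)*ω^64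 + (-1/5)*ω^66 + (2/5)*ω^68 + (1/5)*ω^70 + (2/5)*ω^72 + (-1/5)*ω^74 + (-3/5)*ω^76 + (3/5)*ω^94 + (1/5)*ω^96 + (-2/5)*ω^98 + (-1/5)*ω^100 + (-2/5)*ω^102 + (1/5)*ω^104 + (3/5)*ω^106 + (-3/5)*ω^124 + (-1/5)*ω^126 + (2/5)*ω^128 + (1/5)*ω^130 + (2/5)*ω^132 + (-1/5)*ω^134 + (-3/5)*ω^136 + (3/5)*ω^154 + (1/5)*ω^156 + (-2/5)*ω^158 + (-1/5)*ω^160 + (-2/5)*ω^162 + (1/5)*ω^164 + (3/5)*ω^166) * h30 + ((2/5) + (2/5)*ω^2 + (3/5)*ω^4 + (-4/5)*ω^6 + (3/5)*ω^8 + (2/5)*ω^10) * hΦ)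

lemma eF0 : ((r6:ℂ) * ω^29) = ((1)*(ω^2)^1 + (-1)*(ω^2)^2 + (-1)*(ω^2)^4 + (1)*(ω^2)^7) * ((r1:ℂ) * ω^0) := by
  apply mul_right_cancel₀ (pow_ne_zero 7 ω_ne)
  linear_combination (1)*ω^29 * r6_w - ((1)*(ω^2)^1 + (-1)*(ω^2)^2 + (-1)*(ω^2)^4 + (1)*(ω^2)^7)*ω^0 * r1_w + (a:ℂ) * (((-4/5) + (2/5)*ω^2 + (1/5)*ω^4 + (3/5)*ω^6 + (1/5)*ω^8 + (2/5)*ω^10 + (-4/5)*ω^12) * h30 + ((4/5) + (-2/5)*ω^2 + (-1/5)*ω^4 + (-3/5)*ω^6 + (-1/5)*ω^8 + (-2/5)*ω^10 + (4/5)*ω^12) * hΦ)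

lemma eF1 : ((r7:ℂ) * ω^19) = ((1)*(ω^22)^1 + (-1)*(ω^22)^2 + (-1)*(ω^22)^4 + (1)*(ω^22)^7) * ((r4:ℂ) * ω^0) := by
  apply mul_right_cancel₀ (pow_ne_zero 7 ω_ne)
  linear_combination (1)*ω^19 * r7_w - ((1)*(ω^22)^1 + (-1)*(ω^22)^2 + (-1)*(ω^22)^4 + (1)*(ω^22)^7)*ω^0 * r4_w + (a:ℂ) * (((8/5) + (3/5)*ω^2 + (-3)*ω^4 + (-3)*ω^6 + (7/5)*ω^10 + (11/5)*ω^12 + (14/5)*ω^14 + (-14/5)*ω^18 + (-3/5)*ω^20 + (-3/5)*ω^22 + (-6/5)*ω^24 + (4/5)*ω^26 + (-4/5)*ω^30 + (6/5)*ω^32 + (11/5)*ω^34 + (7/5)*ω^36 + (-7/5)*ω^40 + (-11/5)*ω^42 + (-6/5)*ω^44 + (4/5)*ω^46 + (8/5)*ω^48 + (8/5)*ω^58 + (4/5)*ω^60 + (-6/5)*ω^62 + (-11/5)*ω^64 + (-7/5)*ω^66 + (7/5)*ω^70 + (11/5)*ω^72 + (6/5)*ω^74 + (-4/5)*ω^76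 + (-8/5)*ω^78 + (8/5)*ω^94 + (4/5)*ω^96 + (-6/5)*ω^98 + (-3/5)*ω^100 + (-3/5)*ω^102 + (-6/5)*ω^104 + (4/5)*ω^106 + (8/5)*ω^108 + (-8/5)*ω^124 + (-4/5)*ω^126 + (6/5)*ω^128 + (3/5)*ω^130 + (3/5)*ω^132 + (6/5)*ω^134 + (-4/5)*ω^136 + (-8/5)*ω^138) * h30 + ((-8/5) + (1)*ω^2 + (2)*ω^4 + (-3/5)*ω^6 + (1/5)*ω^12) * hΦ)

lemma eF2 : ((r4:ℂ) * ω^24) = ((1)*(ω^14)^1 + (-1)*(ω^14)^2 + (-1)*(ω^14)^4 + (1)*(ω^14)^7) * ((r6:ℂ) * ω^1) := by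
  apply mul_right_cancel₀ (pow_ne_zero 7 ω_ne)
  linear_combination (1)*ω^24 * r4_w - ((1)*(ω^14)^1 + (-1)*(ω^14)^2 + (-1)*(ω^14)^4 + (1)*(ω^14)^7)*ω^1 * r6_w + (a:ℂ) * (((-9/5) + (-2/5)*ω^2 + (-8/5)*ω^4 + (6/5)*ω^6 + (7/5)*ω^8 + (2)*ω^10 + (-6/5)*ω^12 + (-1/5)*ω^14 + (-3/5)*ω^16 + (-1/5)*ω^18 + (-2/5)*ω^20 + (4/5)*ω^22 + (-4/5)*ω^28 + (2/5)*ω^30 + (1/5)*ω^32 + (3/5)*ω^34 + (1/5)*ω^36 + (2/5)*ω^38 + (-8/5)*ω^40 + (2/5)*ω^42 + (1/5)*ω^44 + (3/5)*ω^46 + (1/5)*ω^48 + (2/5)*ω^50 + (-4/5)*ω^52 + (4/5)*ω^70 + (-2/5)*ω^72 + (-1/5)*ω^74 + (-3/5)*ω^76 + (-1/5)*ω^78 + (-2/5)*ω^80 + (4/5)*ω^82) * h30 + ((9/5) + (-7/5)*ω^2 + (3)*ω^4 + (-12/5)*ω^6 + (7/5)*ω^8 + (2/5)*ω^12) * hΦ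)

lemma eF3 : ((r1:ℂ) * ω^18) = ((1)*(ω^26)^1 + (-1)*(ω^26)^2 + (-1)*(ω^26)^4 + (1)*(ω^26)^7) * ((r7:ℂ) * ω^1) := by
  apply mul_right_cancel₀ (pow_ne_zero 7 ω_ne)
  linear_combination (1)*ω^18 * r1_w - ((1)*(ω^26)^1 + (-1)*(ω^26)^2 + (-1)*(ω^26)^4 + (1)*(ω^26)^7)*ω^1 * r7_w + (a:ℂ) * (((-2/5) + (3/5)*ω^4 + (-3/5)*ω^8 + (-4/5)*ω^10 + (-2/5)*ω^12 + (1/5)*ω^14 + (6/5)*ω^16 + (1/5)*ω^18 + (-2/5)*ω^20 + (-1/5)*ω^22 + (1/5)*ω^24 + (2/5)*ω^26 + (1/5)*ω^28 + (-1/5)*ω^30 + (-2/5)*ω^32 + (-2/5)*ω^34 + (2/5)*ω^36 + (2/5)*ω^38 + (1/5)*ω^40 + (2/5)*ω^42 + (-1/5)*ω^44 + (-6/5)*ω^46 + (-1/5)*ω^48 + (2/5)*ω^50 + (1/5)*ω^52 + (2/5)*ω^54 + (-1/5)*ω^56 + (-3/5)*ω^58 + (3/5)*ω^64 + (1/5)*ω^66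 + (-2/5)*ω^68 + (-1/5)*ω^70 + (-2/5)*ω^72 + (1/5)*ω^74 + (6/5)*ω^76 + (1/5)*ω^78 + (-2/5)*ω^80 + (-1/5)*ω^82 + (-2/5)*ω^84 + (1/5)*ω^86 + (3/5)*ω^88 + (-3/5)*ω^94 + (-1/5)*ω^96 + (2/5)*ω^98 + (1/5)*ω^100 + (2/5)*ω^102 + (-1/5)*ω^104 + (-3/5)*ω^106 + (3/5)*ω^124 + (1/5)*ω^126 + (-2/5)*ω^128 + (-1/5)*ω^130 + (-2/5)*ω^132 + (1/5)*ω^134 + (3/5)*ω^136 + (-3/5)*ω^154 + (-1/5)*ω^156 + (2/5)*ω^158 + (1/5)*ω^160 + (2/5)*ω^162 + (-1/5)*ω^164 + (-3/5)*ω^166) * h30 + ((2/5) + (-2/5)*ω^2 + (-1/5)*ω^4 + (3/5)*ω^6 + (3/5)*ω^10 + (-1/5)*ω^12) * hΦ)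

lemma eG0 : ((r7:ℂ) * ω^29) = ((-1)*(ω^2)^0 + (-1)*(ω^2)^1 + (1)*(ω^2)^3 + (1)*(ω^2)^4 + (1)*(ω^2)^5 + (-1)*(ω^2)^6 + (-1)*(ω^2)^7) * ((r1:ℂ) * ω^0) := by
  apply mul_right_cancel₀ (pow_ne_zero 7 ω_ne)
  linear_combination (1)*ω^29 * r7_w - ((-1)*(ω^2)^0 + (-1)*(ω^2)^1 + (1)*(ω^2)^3 + (1)*(ω^2)^4 + (1)*(ω^2)^5 + (-1)*(ω^2)^6 + (-1)*(ω^2)^7)*ω^0 * r1_w + (a:ℂ) * (((3/5) + (1/5)*ω^2 + (-2/5)*ω^4 + (-1/5)*ω^6 + (-2/5)*ω^8 + (1/5)*ω^10 + (3/5)*ω^12) * h30 + ((-7/5) + (3/5)*ω^4 + (2/5)*ω^6 + (7/5)*ω^8 + (-2/5)*ω^10 + (-4/5)*ω^12) * hΦ)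

lemma eG1 : -((r6:ℂ) * ω^19) = ((-1)*(ω^22)^0 + (-1)*(ω^22)^1 + (1)*(ω^22)^3 + (1)*(ω^22)^4 + (1)*(ω^22)^5 + (-1)*(ω^22)^6 + (-1)*(ω^22)^7) * ((r4:ℂ) * ω^0) := by
  apply mul_right_cancel₀ (pow_ne_zero 7 ω_ne)
  linear_combination (-1)*ω^19 * r6_w - ((-1)*(ω^22)^0 + (-1)*(ω^22)^1 + (1)*(ω^22)^3 + (1)*(ω^22)^4 + (1)*(ω^22)^5 + (-1)*(ω^22)^6 + (-1)*(ω^22)^7)*ω^0 * r4_w + (a:ℂ) * (((-3) + (8/5)*ω^2 + (23/5)*ω^4 + (23/5)*ω^6 + (4/5)*ω^8 + (-13/5)*ω^10 + (-22/5)*ω^12 + (-13/5)*ω^14 + (4/5)*ω^16 + (3)*ω^18 + (3/5)*ω^20 + (2/5)*ω^22 + (2/5)*ω^24 + (-1)*ω^26 + (11/5)*ω^28 + (2)*ω^30 + (-2)*ω^32 + (-19/5)*ω^34 + (-3)*ω^36 + (-4/5)*ω^38 + (13/5)*ω^40 + (22/5)*ω^42 + (13/5)*ω^44 + (-4/5)*ω^46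 + (-3)*ω^48 + (-3/5)*ω^50 + (-2/5)*ω^52 + (-2/5)*ω^54 + (1)*ω^56 + (-11/5)*ω^58 + (-2)*ω^60 + (2)*ω^62 + (19/5)*ω^64 + (7/5)*ω^66 + (-7/5)*ω^70 + (-19/5)*ω^72 + (-2)*ω^74 + (2)*ω^76 + (11/5)*ω^78 + (-1)*ω^80 + (2/5)*ω^82 + (2/5)*ω^84 + (-1)*ω^86 + (3/5)*ω^88 + (6/5)*ω^90 + (-4/5)*ω^92 + (-16/5)*ω^94 + (-4/5)*ω^96 + (6/5)*ω^98 + (3/5)*ω^100 + (11/5)*ω^102 + (2)*ω^104 + (-2)*ω^106 + (-11/5)*ω^108 + (-3/5)*ω^110 + (-6/5)*ω^112 + (4/5)*ω^114 + (8/5)*ω^116 + (8/5)*ω^124 + (4/5)*ω^126 + (-6/5)*ω^128 + (-3/5)*ω^130 + (-3/5)*ω^132 + (-6/5)*ω^134 + (4/5)*ω^136 + (8/5)*ω^138) * h30 + ((23/5) + (-27/5)*ω^2 + (-2/5)*ω^4 + (-1/5)*ω^6 + (-2)*ω^8 + (11/5)*ω^10 + (-3)*ω^12) * hΦ)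

lemma eG2 : -((r1:ℂ) * ω^24) = ((-1)*(ω^14)^0 + (-1)*(ω^14)^1 + (1)*(ω^14)^3 + (1)*(ω^14)^4 + (1)*(ω^14)^5 + (-1)*(ω^14)^6 + (-1)*(ω^14)^7) * ((r6:ℂ) * ω^1) := by
  apply mul_right_cancel₀ (pow_ne_zero 7 ω_ne)
  linear_combination (-1)*ω^24 * r1_w - ((-1)*(ω^14)^0 + (-1)*(ω^14)^1 + (1)*(ω^14)^3 + (1)*(ω^14)^4 + (1)*(ω^14)^5 + (-1)*(ω^14)^6 + (-1)*(ω^14)^7)*ω^1 * r6_w + (a:ℂ) * (((-1/5) + (1/5)*ω^4 + (1)*ω^6 + (2/5)*ω^8 + (-8/5)*ω^10 + (-2/5)*ω^12 + (7/5)*ω^14 + (2/5)*ω^16 + (3/5)*ω^18 + (-3/5)*ω^22 + (-6/5)*ω^24 + (8/5)*ω^26 + (2/5)*ω^28 + (-3/5)*ω^30 + (-4/5)*ω^32 + (-4/5)*ω^34 + (-3/5)*ω^36 + (2/5)*ω^38 + (8/5)*ω^40 + (2/5)*ω^42 + (-3/5)*ω^44 + (-4/5)*ω^46 + (-4/5)*ω^48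 + (-3/5)*ω^50 + (2/5)*ω^52 + (4/5)*ω^54 + (-4/5)*ω^56 + (2/5)*ω^58 + (1/5)*ω^60 + (3/5)*ω^62 + (1/5)*ω^64 + (2/5)*ω^66 + (-4/5)*ω^68 + (-4/5)*ω^70 + (2/5)*ω^72 + (1/5)*ω^74 + (3/5)*ω^76 + (1/5)*ω^78 + (2/5)*ω^80 + (-4/5)*ω^82) * h30 + ((1/5) + (-1)*ω^2 + (6/5)*ω^4 + (-9/5)*ω^6 + (6/5)*ω^8 + (1)*ω^10 + (-9/5)*ω^12) * hΦ)

lemma eG3 : ((r4:ℂ) * ω^18) = ((-1)*(ω^26)^0 + (-1)*(ω^26)^1 + (1)*(ω^26)^3 + (1)*(ω^26)^4 + (1)*(ω^26)^5 + (-1)*(ω^26)^6 + (-1)*(ω^26)^7) * ((r7:ℂ) * ω^1) := by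
  apply mul_right_cancel₀ (pow_ne_zero 7 ω_ne)
  linear_combination (1)*ω^18 * r4_w - ((-1)*(ω^26)^0 + (-1)*(ω^26)^1 + (1)*(ω^26)^3 + (1)*(ω^26)^4 + (1)*(ω^26)^5 + (-1)*(ω^26)^6 + (-1)*(ω^26)^7)*ω^1 * r7_w + (a:ℂ) * (((4/5) + (3/5)*ω^2 + (-4/5)*ω^4 + (-3/5)*ω^6 + (6/5)*ω^8 + (1)*ω^10 + (3/5)*ω^12 + (-1/5)*ω^14 + (-2)*ω^16 + (-1/5)*ω^18 + (6/5)*ω^20 + (3/5)*ω^22 + (3/5)*ω^24 + (-2/5)*ω^26 + (-1)*ω^28 + (1/5)*ω^30 + (3/5)*ω^32 + (3/5)*ω^34 + (1/5)*ω^36 + (-1)*ω^38 + (-2/5)*ω^40 + (-3/5)*ω^42 + (1/5)*ω^44 + (2)*ω^46 + (1/5)*ω^48 + (-6/5)*ω^50 + (-3/5)*ω^52 + (-3/5)*ω^54 + (2/5)*ω^56 + (1)*ω^58 + (-1/5)*ω^60 + (-3/5)*ω^62 + (-3/5)*ω^64 + (-1/5)*ω^66 + (1)*ω^68 + (2/5)*ω^70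 + (3/5)*ω^72 + (-1/5)*ω^74 + (-2)*ω^76 + (-1/5)*ω^78 + (3/5)*ω^80 + (2/5)*ω^82 + (1)*ω^84 + (-1/5)*ω^86 + (-3/5)*ω^88 + (3/5)*ω^94 + (1/5)*ω^96 + (-1)*ω^98 + (-2/5)*ω^100 + (-3/5)*ω^102 + (1/5)*ω^104 + (7/5)*ω^106 + (-1/5)*ω^110 + (-1/5)*ω^112 + (-3/5)*ω^114 + (-3/5)*ω^124 + (-1/5)*ω^126 + (1)*ω^128 + (2/5)*ω^130 + (-2/5)*ω^134 + (-1)*ω^136 + (1/5)*ω^138 + (3/5)*ω^140 + (3/5)*ω^154 + (1/5)*ω^156 + (-2/5)*ω^158 + (-1/5)*ω^160 + (-2/5)*ω^162 + (1/5)*ω^164 + (3/5)*ω^166) * h30 + ((-4/5) + (4/5)*ω^2 + (1/5)*ω^4 + (-4/5)*ω^6 + (-3/5)*ω^8 + (-3/5)*ω^10 + (2/5)*ω^12) * hΦ)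

lemma eH0 : ((r8:ℂ) * ω^0) = ((1)*(ω^2)^0 + (1)*(ω^2)^1 + (-1)*(ω^2)^3 + (-1)*(ω^2)^4 + (-1)*(ω^2)^5 + (2)*(ω^2)^7) * ((r1:ℂ) * ω^0) := by
  apply mul_right_cancel₀ (pow_ne_zero 7 ω_ne)
  linear_combination (1)*ω^0 * r8_w - ((1)*(ω^2)^0 + (1)*(ω^2)^1 + (-1)*(ω^2)^3 + (-1)*(ω^2)^4 + (-1)*(ω^2)^5 + (2)*(ω^2)^7)*ω^0 * r1_w + (a:ℂ) * ((0) * h30 + ((1) + (4/5)*ω^2 + (-7/5)*ω^4 + (-6/5)*ω^8 + (-4/5)*ω^10 + (8/5)*ω^12) * hΦ)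

lemma eH1 : -((r5:ℂ) * ω^0) = ((1)*(ω^22)^0 + (1)*(ω^22)^1 + (-1)*(ω^22)^3 + (-1)*(ω^22)^4 + (-1)*(ω^22)^5 + (2)*(ω^22)^7) * ((r4:ℂ) * ω^0) := by
  apply mul_right_cancel₀ (pow_ne_zero 7 ω_ne)
  linear_combination (-1)*ω^0 * r5_w - ((1)*(ω^22)^0 + (1)*(ω^22)^1 + (-1)*(ω^22)^3 + (-1)*(ω^22)^4 + (-1)*(ω^22)^5 + (2)*(ω^22)^7)*ω^0 * r4_w + (a:ℂ) * (((13/5) + (-4/5)*ω^2 + (-31/5)*ω^4 + (-27/5)*ω^6 + (2/5)*ω^8 + (16/5)*ω^10 + (17/5)*ω^12 + (3)*ω^14 + (-2/5)*ω^16 + (-4)*ω^18 + (4/5)*ω^22 + (-6/5)*ω^24 + (-3/5)*ω^26 + (-11/5)*ω^28 + (-2)*ω^30 + (2)*ω^32 + (27/5)*ω^34 + (19/5)*ω^36 + (-2/5)*ω^38 + (-16/5)*ω^40 + (-17/5)*ω^42 + (-3)*ω^44 + (2/5)*ω^46 + (4)*ω^48 + (-4/5)*ω^52 + (6/5)*ω^54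 + (3/5)*ω^56 + (11/5)*ω^58 + (2)*ω^60 + (-2)*ω^62 + (-27/5)*ω^64 + (-11/5)*ω^66 + (6/5)*ω^68 + (2)*ω^70 + (14/5)*ω^72 + (12/5)*ω^74 + (-8/5)*ω^76 + (-16/5)*ω^78 + (8/5)*ω^80 + (4/5)*ω^82 + (-6/5)*ω^84 + (-3/5)*ω^86 + (-3/5)*ω^88 + (-6/5)*ω^90 + (4/5)*ω^92 + (24/5)*ω^94 + (8/5)*ω^96 + (-12/5)*ω^98 + (-6/5)*ω^100 + (-6/5)*ω^102 + (-12/5)*ω^104 + (8/5)*ω^106 + (16/5)*ω^108 + (-16/5)*ω^124 + (-8/5)*ω^126 + (12/5)*ω^128 + (6/5)*ω^130 + (6/5)*ω^132 + (12/5)*ω^134 + (-8/5)*ω^136 + (-16/5)*ω^138) * h30 + ((-23/5) + (22/5)*ω^2 + (14/5)*ω^4 + (-1)*ω^6 + (7/5)*ω^8 + (-1)*ω^10 + (14/5)*ω^12) * hΦ)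

lemma eH2 : -((r3:ℂ) * ω^1) = ((1)*(ω^14)^0 + (1)*(ω^14)^1 + (-1)*(ω^14)^3 + (-1)*(ω^14)^4 + (-1)*(ω^14)^5 + (2)*(ω^14)^7) * ((r6:ℂ) * ω^1) := by
  apply mul_right_cancel₀ (pow_ne_zero 7 ω_ne)
  linear_combination (-1)*ω^1 * r3_w - ((1)*(ω^14)^0 + (1)*(ω^14)^1 + (-1)*(ω^14)^3 + (-1)*(ω^14)^4 + (-1)*(ω^14)^5 + (2)*(ω^14)^7)*ω^1 * r6_w + (a:ℂ) * (((-2/5) + (-1/5)*ω^2 + (-3/5)*ω^4 + (-1/5)*ω^6 + (-2/5)*ω^8 + (12/5)*ω^10 + (-8/5)*ω^14 + (-1)*ω^16 + (-4/5)*ω^18 + (-2/5)*ω^20 + (7/5)*ω^22 + (6/5)*ω^24 + (-4/5)*ω^26 + (-4/5)*ω^28 + (2/5)*ω^30 + (1/5)*ω^32 + (3/5)*ω^34 + (1/5)*ω^36 + (2/5)*ω^38 + (-12/5)*ω^40 + (4/5)*ω^44 + (7/5)*ω^46 + (1)*ω^48 + (1)*ω^50 + (-6/5)*ω^52 + (-4/5)*ω^54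 + (8/5)*ω^70 + (-4/5)*ω^72 + (-2/5)*ω^74 + (-6/5)*ω^76 + (-2/5)*ω^78 + (-4/5)*ω^80 + (8/5)*ω^82) * h30 + ((2/5) + (-1/5)*ω^2 + (4/5)*ω^4 + (-1/5)*ω^6 + (-1/5)*ω^8 + (-6/5)*ω^10 + (8/5)*ω^12) * hΦ)

lemma eH3 : ((r2:ℂ) * ω^1) = ((1)*(ω^26)^0 + (1)*(ω^26)^1 + (-1)*(ω^26)^3 + (-1)*(ω^26)^4 + (-1)*(ω^26)^5 + (2)*(ω^26)^7) * ((r7:ℂ) * ω^1) := by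
  apply mul_right_cancel₀ (pow_ne_zero 7 ω_ne)
  linear_combination (1)*ω^1 * r2_w - ((1)*(ω^26)^0 + (1)*(ω^26)^1 + (-1)*(ω^26)^3 + (-1)*(ω^26)^4 + (-1)*(ω^26)^5 + (2)*(ω^26)^7)*ω^1 * r7_w + (a:ℂ) * (((1)*ω^2 + (7/5)*ω^4 + (4/5)*ω^6 + (-1)*ω^8 + (-1)*ω^10 + (-7/5)*ω^12 + (1/5)*ω^14 + (11/5)*ω^16 + (2/5)*ω^18 + (-3/5)*ω^20 + (-3/5)*ω^22 + (-3/5)*ω^24 + (2/5)*ω^26 + (1)*ω^28 + (-1/5)*ω^30 + (-3/5)*ω^32 + (-6/5)*ω^34 + (-2/5)*ω^36 + (4/5)*ω^38 + (2/5)*ω^40 + (7/5)*ω^42 + (-1/5)*ω^44 + (-11/5)*ω^46 + (-2/5)*ω^48 + (3/5)*ω^50 + (3/5)*ω^52 + (3/5)*ω^54 + (-2/5)*ω^56 + (-1)*ω^58 + (1/5)*ω^60 + (3/5)*ω^62 + (6/5)*ω^64 + (2/5)*ω^66 + (-4/5)*ω^68 + (-2/5)*ω^70 + (-7/5)*ω^72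 + (1/5)*ω^74 + (11/5)*ω^76 + (2/5)*ω^78 + (-2/5)*ω^82 + (-1)*ω^84 + (1/5)*ω^86 + (3/5)*ω^88 + (-6/5)*ω^94 + (-2/5)*ω^96 + (4/5)*ω^98 + (2/5)*ω^100 + (7/5)*ω^102 + (-1/5)*ω^104 + (-8/5)*ω^106 + (-1/5)*ω^108 + (-2/5)*ω^110 + (1/5)*ω^112 + (3/5)*ω^114 + (6/5)*ω^124 + (2/5)*ω^126 + (-4/5)*ω^128 + (-2/5)*ω^130 + (-4/5)*ω^132 + (2/5)*ω^134 + (6/5)*ω^136 + (-6/5)*ω^154 + (-2/5)*ω^156 + (4/5)*ω^158 + (2/5)*ω^160 + (4/5)*ω^162 + (-2/5)*ω^164 + (-6/5)*ω^166) * h30 + ((-2)*ω^2 + (3/5)*ω^4 + (-2/5)*ω^6 + (-3/5)*ω^8 + (6/5)*ω^10 + (-8/5)*ω^12) * hΦ)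

lemma gram0 : (r1:ℂ)^2 * ((ω^2)^0 + (-ω^28)^0) + (r4:ℂ)^2 * ((ω^22)^0 + (-ω^8)^0) + (r6:ℂ)^2 * ((ω^14)^0 + (-ω^16)^0) + (r7:ℂ)^2 * ((ω^26)^0 + (-ω^4)^0) = 2 := by
  apply mul_right_cancel₀ (pow_ne_zero 7 ω_ne)
  linear_combination ((ω^2)^0 + (-ω^28)^0) * r1_sq + ((ω^22)^0 + (-ω^8)^0) * r4_sq + ((ω^14)^0 + (-ω^16)^0) * r6_sq + ((ω^26)^0 + (-ω^4)^0) * r7_sq + ((0) * h30 + (0) * hΦ)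

lemma gram1 : (r1:ℂ)^2 * ((ω^2)^1 + (-ω^28)^1) + (r4:ℂ)^2 * ((ω^22)^1 + (-ω^8)^1) + (r6:ℂ)^2 * ((ω^14)^1 + (-ω^16)^1) + (r7:ℂ)^2 * ((ω^26)^1 + (-ω^4)^1) = 1 := by
  apply mul_right_cancel₀ (pow_ne_zero 7 ω_ne)
  linear_combination ((ω^2)^1 + (-ω^28)^1) * r1_sq + ((ω^22)^1 + (-ω^8)^1) * r4_sq + ((ω^14)^1 + (-ω^16)^1) * r6_sq + ((ω^26)^1 + (-ω^4)^1) * r7_sq + (((-2/15)*ω^1 + (2/15)*ω^3 + (-4/15)*ω^7 + (-2/15)*ω^9) * h30 + ((2/15)*ω^1 + (-4/15)*ω^3 + (2/5)*ω^5 + (-11/15)*ω^7 + (11/15)*ω^9 + (-3/5)*ω^11 + (2/15)*ω^13) * hΦ)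

lemma gram2 : (r1:ℂ)^2 * ((ω^2)^2 + (-ω^28)^2) + (r4:ℂ)^2 * ((ω^22)^2 + (-ω^8)^2) + (r6:ℂ)^2 * ((ω^14)^2 + (-ω^16)^2) + (r7:ℂ)^2 * ((ω^26)^2 + (-ω^4)^2) = 1 := by
  apply mul_right_cancel₀ (pow_ne_zero 7 ω_ne)
  linear_combination ((ω^2)^2 + (-ω^28)^2) * r1_sq + ((ω^22)^2 + (-ω^8)^2) * r4_sq + ((ω^14)^2 + (-ω^16)^2) * r6_sq + ((ω^26)^2 + (-ω^4)^2) * r7_sq + (((-1/15)*ω^1 + (-1/3)*ω^3 + (1/3)*ω^5 + (-1/5)*ω^7 + (2/5)*ω^9 + (-1/5)*ω^11 + (2/15)*ω^13 + (1/15)*ω^15 + (-1/15)*ω^17 + (-2/15)*ω^19 + (2/15)*ω^21 + (-1/5)*ω^23 + (-1/5)*ω^25 + (4/15)*ω^27 + (2/5)*ω^29 + (1/5)*ω^31 + (2/15)*ω^33 + (1/15)*ω^35 + (1/15)*ω^37) * h30 + ((1/15)*ω^1 + (4/15)*ω^3 + (-3/5)*ω^5 + (-1/15)*ω^7 + (1/15)*ω^9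 + (-1/3)*ω^13) * hΦ)

lemma gram3 : (r1:ℂ)^2 * ((ω^2)^3 + (-ω^28)^3) + (r4:ℂ)^2 * ((ω^22)^3 + (-ω^8)^3) + (r6:ℂ)^2 * ((ω^14)^3 + (-ω^16)^3) + (r7:ℂ)^2 * ((ω^26)^3 + (-ω^4)^3) = 1 := by
  apply mul_right_cancel₀ (pow_ne_zero 7 ω_ne)
  linear_combination ((ω^2)^3 + (-ω^28)^3) * r1_sq + ((ω^22)^3 + (-ω^8)^3) * r4_sq + ((ω^14)^3 + (-ω^16)^3) * r6_sq + ((ω^26)^3 + (-ω^4)^3) * r7_sq + (((-3/5)*ω^1 + (-2/5)*ω^7 + (1/15)*ω^9 + (2/15)*ω^11 + (-4/15)*ω^13 + (4/15)*ω^15 + (4/15)*ω^19 + (-1/15)*ω^21 + (2/15)*ω^23 + (-11/15)*ω^25 + (1/15)*ω^27 + (2/15)*ω^29 + (7/15)*ω^31 + (2/15)*ω^33 + (1/15)*ω^35 + (1/5)*ω^37 + (-1/15)*ω^39 + (-2/15)*ω^41 + (2/15)*ω^43 + (-2/15)*ω^45 + (-1/15)*ω^47 + (2/15)*ω^49 +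 (-2/15)*ω^51 + (1/15)*ω^53 + (1/3)*ω^55 + (-4/15)*ω^59 + (-1/3)*ω^61 + (-2/15)*ω^63 + (-1/15)*ω^65) * h30 + ((3/5)*ω^1 + (-3/5)*ω^3 + (3/5)*ω^5 + (-3/5)*ω^7 + (3/5)*ω^9) * hΦ)

lemma gram4 : (r1:ℂ)^2 * ((ω^2)^4 + (-ω^28)^4) + (r4:ℂ)^2 * ((ω^22)^4 + (-ω^8)^4) + (r6:ℂ)^2 * ((ω^14)^4 + (-ω^16)^4) + (r7:ℂ)^2 * ((ω^26)^4 + (-ω^4)^4) = 1 := by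
  apply mul_right_cancel₀ (pow_ne_zero 7 ω_ne)
  linear_combination ((ω^2)^4 + (-ω^28)^4) * r1_sq + ((ω^22)^4 + (-ω^8)^4) * r4_sq + ((ω^14)^4 + (-ω^16)^4) * r6_sq + ((ω^26)^4 + (-ω^4)^4) * r7_sq + (((-2/15)*ω^1 + (-4/15)*ω^3 + (4/15)*ω^5 + (-8/15)*ω^7 + (4/15)*ω^9 + (-1/5)*ω^11 + (1/15)*ω^19 + (1/3)*ω^21 + (1/15)*ω^23 + (-1/15)*ω^25 + (-1/15)*ω^27 + (1/5)*ω^29 + (2/15)*ω^31 + (7/15)*ω^33 + (-1/3)*ω^35 + (2/5)*ω^37 + (-2/15)*ω^39 + (1/15)*ω^41 + (-1/15)*ω^43 + (1/5)*ω^45 + (-1/15)*ω^49 + (-1/3)*ω^51 + (-1/15)*ω^53 + (1/15)*ω^55 + (-1/15)*ω^57 + (-1/15)*ω^59 + (-1/5)*ω^61 + (-1/5)*ω^63 + (2/15)*ω^65 + (-2/15)*ω^67 + (-1/15)*ω^69 + (1/5)*ω^71 + (-1/15)*ω^75 + (-2/15)*ω^77 + (1/15)*ω^79 + (1/3)*ω^81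 + (1/15)*ω^83 + (-1/15)*ω^85 + (1/15)*ω^87 + (4/15)*ω^89 + (2/15)*ω^91 + (1/15)*ω^93) * h30 + ((2/15)*ω^1 + (2/15)*ω^3 + (-2/5)*ω^5 + (1/15)*ω^7 + (-1/15)*ω^9 + (1/5)*ω^11 + (-4/15)*ω^13) * hΦ)

lemma gram5 : (r1:ℂ)^2 * ((ω^2)^5 + (-ω^28)^5) + (r4:ℂ)^2 * ((ω^22)^5 + (-ω^8)^5) + (r6:ℂ)^2 * ((ω^14)^5 + (-ω^16)^5) + (r7:ℂ)^2 * ((ω^26)^5 + (-ω^4)^5) = 1 := by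
  apply mul_right_cancel₀ (pow_ne_zero 7 ω_ne)
  linear_combination ((ω^2)^5 + (-ω^28)^5) * r1_sq + ((ω^22)^5 + (-ω^8)^5) * r4_sq + ((ω^14)^5 + (-ω^16)^5) * r6_sq + ((ω^26)^5 + (-ω^4)^5) * r7_sq + (((1/15)*ω^13 + (2/15)*ω^15 + (-11/15)*ω^17 + (2/15)*ω^19 + (2/15)*ω^21 + (2/15)*ω^23 + (-1/15)*ω^25 + (2/3)*ω^27 + (-1/15)*ω^29 + (2/15)*ω^31 + (1/15)*ω^33 + (-1/5)*ω^41 + (3/5)*ω^47 + (-1/15)*ω^51 + (-1/3)*ω^53 + (1/15)*ω^55 + (-2/3)*ω^57 + (1/15)*ω^59 + (-2/15)*ω^61 + (-1/15)*ω^63 + (1/15)*ω^71 + (2/15)*ω^73 + (-1/15)*ω^75 + (-1/3)*ω^77 + (-1/15)*ω^79 + (1/3)*ω^81 + (1/15)*ω^83 + (2/5)*ω^87 + (1/5)*ω^93 + (-1/15)*ω^101 + (-2/15)*ω^103 + (1/15)*ω^105 + (1/3)*ω^107 + (1/15)*ω^109 + (-2/15)*ω^111 + (-2/15)*ω^113 +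 (-2/15)*ω^115 + (-4/15)*ω^117 + (-2/15)*ω^119 + (-1/15)*ω^121) * h30 + ((-1)*ω^7 + (1)*ω^9 + (-1)*ω^11) * hΦ)

lemma gram6 : (r1:ℂ)^2 * ((ω^2)^6 + (-ω^28)^6) + (r4:ℂ)^2 * ((ω^22)^6 + (-ω^8)^6) + (r6:ℂ)^2 * ((ω^14)^6 + (-ω^16)^6) + (r7:ℂ)^2 * ((ω^26)^6 + (-ω^4)^6) = 0 := by
  apply mul_right_cancel₀ (pow_ne_zero 7 ω_ne)
  linear_combination ((ω^2)^6 + (-ω^28)^6) * r1_sq + ((ω^22)^6 + (-ω^8)^6) * r4_sq + ((ω^14)^6 + (-ω^16)^6) * r6_sq + ((ω^26)^6 + (-ω^4)^6) * r7_sq + (((2/5)*ω^1 + (-2/5)*ω^7 + (2/5)*ω^13 + (1/15)*ω^15 + (2/15)*ω^17 + (-2/15)*ω^19 + (2/15)*ω^21 + (1/15)*ω^23 + (1/3)*ω^25 + (-2/15)*ω^27 + (1/15)*ω^29 + (-1/15)*ω^31 + (1/15)*ω^33 + (-2/15)*ω^35 + (1/3)*ω^37 + (-2/5)*ω^43 +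 (-1/15)*ω^45 + (-2/15)*ω^47 + (1/3)*ω^49 + (-1/5)*ω^51 + (-1/5)*ω^53 + (-1/5)*ω^55 + (-2/15)*ω^59 + (4/15)*ω^61 + (-1/15)*ω^63 + (2/15)*ω^65 + (-1/3)*ω^67 + (2/5)*ω^73 + (1/15)*ω^75 + (2/15)*ω^77 + (-1/3)*ω^79 + (1/5)*ω^81 + (1/5)*ω^83 + (1/15)*ω^85 + (2/15)*ω^87 + (1/15)*ω^89 + (1/15)*ω^97 + (2/15)*ω^99 + (-1/15)*ω^101 + (-2/15)*ω^103 + (-2/15)*ω^105 + (1/5)*ω^109 + (-1/5)*ω^111 + (-1/5)*ω^113 + (-1/15)*ω^115 + (-2/15)*ω^117 + (-1/15)*ω^119 + (-1/15)*ω^127 + (-2/15)*ω^129 + (1/15)*ω^131 + (1/3)*ω^133 + (1/15)*ω^135 + (-2/15)*ω^137 + (-1/15)*ω^139 + (1/15)*ω^141 + (2/15)*ω^143 + (4/15)*ω^145 + (2/15)*ω^147 + (1/15)*ω^149) * h30 + ((-2/5)*ω^1 + (2/5)*ω^3 + (-2/5)*ω^5 + (2/5)*ω^7 + (-2/5)*ω^9)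 * hΦ)

lemma gram7 : (r1:ℂ)^2 * ((ω^2)^7 + (-ω^28)^7) + (r4:ℂ)^2 * ((ω^22)^7 + (-ω^8)^7) + (r6:ℂ)^2 * ((ω^14)^7 + (-ω^16)^7) + (r7:ℂ)^2 * ((ω^26)^7 + (-ω^4)^7) = 0 := by
  apply mul_right_cancel₀ (pow_ne_zero 7 ω_ne)
  linear_combination ((ω^2)^7 + (-ω^28)^7) * r1_sq + ((ω^22)^7 + (-ω^8)^7) * r4_sq + ((ω^14)^7 + (-ω^16)^7) * r6_sq + ((ω^26)^7 + (-ω^4)^7) * r7_sq + (((-1/15)*ω^1 + (4/15)*ω^3 + (-4/15)*ω^5 + (-4/15)*ω^7 + (-4/15)*ω^9 + (4/15)*ω^11 + (-1/15)*ω^13 + (4/15)*ω^15 + (2/15)*ω^17 + (1/5)*ω^19 + (2/5)*ω^23 + (-1/15)*ω^27 + (-1/5)*ω^29 + (1/5)*ω^31 + (-1/3)*ω^33 + (-1/15)*ω^35 + (1/5)*ω^37 + (2/5)*ω^39 + (-1/5)*ω^41 + (1/15)*ω^43 + (-4/15)*ω^45 + (-2/15)*ω^47 + (-1/5)*ω^49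 + (-2/5)*ω^53 + (-2/15)*ω^57 + (4/15)*ω^59 + (-1/15)*ω^61 + (1/5)*ω^63 + (1/5)*ω^65 + (-2/15)*ω^67 + (-3/5)*ω^69 + (1/5)*ω^71 + (-1/15)*ω^73 + (4/15)*ω^75 + (2/15)*ω^77 + (1/5)*ω^79 + (2/5)*ω^83 + (2/15)*ω^87 + (-4/15)*ω^89 + (1/15)*ω^91 + (-1/5)*ω^93 + (-1/5)*ω^95 + (2/15)*ω^97 + (7/15)*ω^99 + (-1/15)*ω^101 + (-1/5)*ω^107 + (-1/15)*ω^109 + (-2/15)*ω^111 + (-4/15)*ω^113 + (-2/15)*ω^115 + (-1/15)*ω^117 + (1/15)*ω^123 + (1/3)*ω^125 + (-2/15)*ω^127 + (-7/15)*ω^129 + (1/15)*ω^131 + (1/5)*ω^137 + (1/15)*ω^139 + (2/15)*ω^141 + (4/15)*ω^143 + (2/15)*ω^145 + (1/15)*ω^147 + (-1/15)*ω^153 + (-2/15)*ω^155 + (1/15)*ω^157 + (1/3)*ω^159 + (1/15)*ω^161 + (-2/15)*ω^163 + (-1/15)*ω^165 + (-1/15)*ω^169 + (-2/15)*ω^171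 + (-4/15)*ω^173 + (-2/15)*ω^175 + (-1/15)*ω^177) * h30 + ((1/15)*ω^1 + (-1/3)*ω^3 + (3/5)*ω^5 + (-4/15)*ω^7 + (4/15)*ω^9 + (-1/5)*ω^11 + (4/15)*ω^13) * hΦ)

abbrev Z8 := ℤ × ℤ × ℤ × ℤ × ℤ × ℤ × ℤ × ℤ

def pev (x : Z8) (z : ℂ) : ℂ := (x.1:ℂ)*z^0 + (x.2.1:ℂ)*z^1 + (x.2.2.1:ℂ)*z^2 + (x.2.2.2.1:ℂ)*z^3 + (x.2.2.2.2.1:ℂ)*z^4 + (x.2.2.2.2.2.1:ℂ)*z^5 + (x.2.2.2.2.2.2.1:ℂ)*z^6 + (x.2.2.2.2.2.2.2:ℂ)*z^7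

def zz : Fin 4 → ℂ := ![ω^2, ω^22, ω^14, ω^26]
def zb : Fin 4 → ℂ := ![-ω^28, -ω^8, -ω^16, -ω^4]
def A0 : Fin 4 → ℂ := ![(r1:ℂ) * ω^0, (r4:ℂ) * ω^0, (r6:ℂ) * ω^1, (r7:ℂ) * ω^1]
def rr : Fin 4 → ℝ := ![r1, r4, r6, r7]

def vec (x : Z8) : Fin 4 → ℂ := fun i => pev x (zz i) * A0 i

def Rn (n : ℕ) (v : Fin 4 → ℂ) : Fin 4 → ℂ := fun i => zz i ^ n * v i

def M (x : Z8) : Z8 := (-x.2.2.2.2.2.2.2, x.1 - x.2.2.2.2.2.2.2, x.2.1, x.2.2.1 + x.2.2.2.2.2.2.2, x.2.2.2.1 + x.2.2.2.2.2.2.2, x.2.2.2.2.1 + x.2.2.2.2.2.2.2, x.2.2.2.2.2.1, x.2.2.2.2.2.2.1 - x.2.2.2.2.2.2.2)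

def dot (x y : Z8) : ℤ := x.1*y.1 + x.2.1*y.2.1 + x.2.2.1*y.2.2.1 + x.2.2.2.1*y.2.2.2.1 + x.2.2.2.2.1*y.2.2.2.2.1 + x.2.2.2.2.2.1*y.2.2.2.2.2.1 + x.2.2.2.2.2.2.1*y.2.2.2.2.2.2.1 + x.2.2.2.2.2.2.2*y.2.2.2.2.2.2.2

def Gr (y : Z8) : Z8 := (2*y.1 + 1*y.2.1 + 1*y.2.2.1 + 1*y.2.2.2.1 + 1*y.2.2.2.2.1 + 1*y.2.2.2.2.2.1, 1*y.1 + 2*y.2.1 + 1*y.2.2.1 + 1*y.2.2.2.1 + 1*y.2.2.2.2.1 + 1*y.2.2.2.2.2.1 + 1*y.2.2.2.2.2.2.1, 1*y.1 + 1*y.2.1 + 2*y.2.2.1 + 1*y.2.2.2.1 + 1*y.2.2.2.2.1 + 1*y.2.2.2.2.2.1 + 1*y.2.2.2.2.2.2.1 + 1*y.2.2.2.2.2.2.2, 1*y.1 + 1*y.2.1 + 1*y.2.2.1 + 2*y.2.2.2.1 + 1*y.2.2.2.2.1 + 1*y.2.2.2.2.2.1 + 1*y.2.2.2.2.2.2.1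 + 1*y.2.2.2.2.2.2.2, 1*y.1 + 1*y.2.1 + 1*y.2.2.1 + 1*y.2.2.2.1 + 2*y.2.2.2.2.1 + 1*y.2.2.2.2.2.1 + 1*y.2.2.2.2.2.2.1 + 1*y.2.2.2.2.2.2.2, 1*y.1 + 1*y.2.1 + 1*y.2.2.1 + 1*y.2.2.2.1 + 1*y.2.2.2.2.1 + 2*y.2.2.2.2.2.1 + 1*y.2.2.2.2.2.2.1 + 1*y.2.2.2.2.2.2.2, 1*y.2.1 + 1*y.2.2.1 + 1*y.2.2.2.1 + 1*y.2.2.2.2.1 + 1*y.2.2.2.2.2.1 + 2*y.2.2.2.2.2.2.1 + 1*y.2.2.2.2.2.2.2, 1*y.2.2.1 + 1*y.2.2.2.1 + 1*y.2.2.2.2.1 + 1*y.2.2.2.2.2.1 + 1*y.2.2.2.2.2.2.1 + 2*y.2.2.2.2.2.2.2)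

def sub (x : Z8) (t : ℤ) (y : Z8) : Z8 := (x.1 - t*y.1, x.2.1 - t*y.2.1, x.2.2.1 - t*y.2.2.1, x.2.2.2.1 - t*y.2.2.2.1, x.2.2.2.2.1 - t*y.2.2.2.2.1, x.2.2.2.2.2.1 - t*y.2.2.2.2.2.1, x.2.2.2.2.2.2.1 - t*y.2.2.2.2.2.2.1, x.2.2.2.2.2.2.2 - t*y.2.2.2.2.2.2.2)

def PG : List Z8 := [
  (1, 0, 0, 0, 0, 0, 0, 0),
  (1, 0, -1, -1, 0, -1, 1, 1),
  (-1, -1, 1, 0, 0, 1, 0, -1),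
  (-1, 1, 0, 0, 1, 0, -1, 0),
  (-1, 0, 1, 1, 0, 0, 0, -1),
  (0, 1, -1, 0, -1, 0, 0, 1),
  (-1, -1, 0, 1, 1, 1, -1, -1),
  (1, 1, 0, -1, -1, -1, 0, 2)]

def L : List Z8 := (List.range 30).flatMap fun k => PG.map fun p => M^[k] p

def pA : Z8 := (1, 0, 0, 0, 0, 0, 0, 0)

lemma check : (L.all fun x => L.contains (sub x (dot x (Gr pA)) pA)) = true := by
  decide +kernel

lemma zz30 (i : Fin 4) : zz i ^ 30 = 1 := by
  have h : ω^60 = 1 := by linear_combination (ω^30 - 1) * h30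
  have e : ∀ k : ℕ, (ω^(2*k))^30 = 1 := fun k => by
    rw [← pow_mul, show 2*k*30 = 60*k by ring, pow_mul, h, one_pow]
  fin_cases i
  · exact e 1
  · exact e 11
  · exact e 7
  · exact e 13

lemma zzb (i : Fin 4) : zz i * zb i = 1 := by
  fin_cases i <;> simp [zz, zb] <;> linear_combination -h30

lemma zΦ (i : Fin 4) : zz i ^ 8 = - zz i ^ 7 + zz i ^ 5 + zz i ^ 4 + zz i ^ 3 - zz i - 1 := by
  fin_cases i
  · show (ω^2)^8 = - (ω^2)^7 + (ω^2)^5 + (ω^2)^4 + (ω^2)^3 - ω^2 - 1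
    linear_combination (0) * h30 + ((1)) * hΦ
  · show (ω^22)^8 = - (ω^22)^7 + (ω^22)^5 + (ω^22)^4 + (ω^22)^3 - ω^22 - 1
    linear_combination ((1)*ω^4 + (1)*ω^6 + (-1)*ω^20 + (1)*ω^26 + (1)*ω^28 + (-1)*ω^34 + (-1)*ω^36 + (1)*ω^50 + (-1)*ω^56 + (-1)*ω^58 + (1)*ω^64 + (-1)*ω^80 + (1)*ω^86 + (-1)*ω^94 + (-1)*ω^116 + (1)*ω^124 + (1)*ω^146) * h30 + ((1) + (-1)*ω^2 + (-1)*ω^12) * hΦ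
  · show (ω^14)^8 = - (ω^14)^7 + (ω^14)^5 + (ω^14)^4 + (ω^14)^3 - ω^14 - 1
    linear_combination ((1)*ω^8 + (1)*ω^10 + (-1)*ω^12 + (1)*ω^22 + (-1)*ω^26 + (-1)*ω^38 + (-1)*ω^40 + (-1)*ω^52 + (1)*ω^68 + (1)*ω^82) * h30 + ((1) + (-1)*ω^2 + (1)*ω^4 + (-1)*ω^8 + (1)*ω^10) * hΦ
  · show (ω^26)^8 = - (ω^26)^7 + (ω^26)^5 + (ω^26)^4 + (ω^26)^3 - ω^26 - 1
    linear_combination ((-1)*ω^2 + (1)*ω^10 + (-1)*ω^14 + (1)*ω^18 + (-1)*ω^28 + (1)*ω^32 + (-1)*ω^40 + (1)*ω^44 + (-1)*ω^48 + (1)*ω^58 + (-1)*ω^62 + (1)*ω^70 + (-1)*ω^74 + (-1)*ω^88 + (1)*ω^92 + (-1)*ω^100 + (1)*ω^118 + (-1)*ω^122 + (-1)*ω^148 + (1)*ω^152 + (1)*ω^178) * h30 + ((1) + (1)*ω^6 + (1)*ω^12) * hΦ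


lemma star_zz (i : Fin 4) : star (zz i) = zb i := by
  have h : star ω = -ω^29 := by
    apply mul_left_cancel₀ ω_ne
    linear_combination star_ω + h30
  have e : ∀ k : ℕ, star (ω^k) * ω^k = 1 := fun k => by
    rw [star_pow, ← mul_pow, mul_comm, star_ω, one_pow]
  have hz : star (zz i) * zz i = 1 := by
    fin_cases i
    · exact e 2
    · exact e 22
    · exact e 14
    · exact e 26
  have hne : zz i ≠ 0 := left_ne_zero_of_mul_eq_one (zzb i)
  apply mul_right_cancel₀ hne
  rw [hz, mul_comm, zzb]

lemma A0_sq (i : Fin 4) : A0 i * star (A0 i) = (rr i : ℂ)^2 := by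
  have h := star_ω
  fin_cases i <;> simp [A0, rr] at h ⊢
  · ring
  · ring
  · linear_combination (r6:ℂ)^2 * h
  · linear_combination (r7:ℂ)^2 * h

lemma Rn_vec (x : Z8) : Rn 1 (vec x) = vec (M x) := by
  ext i
  simp only [Rn, vec, pev, M]
  push_cast
  linear_combination (x.2.2.2.2.2.2.2:ℂ) * A0 i * zΦ i

lemma Rn_Rn (m n : ℕ) (v) : Rn m (Rn n v) = Rn (m+n) v := by
  ext i; simp only [Rn]; ring

lemma Rn_mod (m : ℕ) (v) : Rn (m % 30) v = Rn m v := by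
  ext i; simp only [Rn]
  conv_rhs => rw [← Nat.mod_add_div m 30, pow_add, pow_mul, zz30, one_pow, mul_one]

lemma Rn_iter (n : ℕ) (x : Z8) : Rn n (vec x) = vec (M^[n] x) := by
  induction n generalizing x with
  | zero => ext i; simp [Rn]
  | succ n ih => rw [← Rn_Rn, Rn_vec, ih, Function.iterate_succ_apply]

lemma star_pev (x : Z8) (i : Fin 4) : star (pev x (zz i)) = pev x (zb i) := by
  rw [← star_zz]
  simp [pev]

lemma two_rinner (v w : Fin 4 → ℂ) : ((2 * rinner v w : ℝ) : ℂ) = ∑ i, (v i * star (w i) + star (v i) * w i) := by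
  have h : ((rinner v w : ℝ) : ℂ) * 2 = (∑ i, v i * star (w i)) + star (∑ i, v i * star (w i)) := by
    rw [rinner, Complex.star_def, Complex.add_conj]; push_cast; ring
  push_cast
  rw [mul_comm, h, star_sum, Finset.sum_add_distrib]
  congr 1
  refine Finset.sum_congr rfl fun i _ => ?_
  rw [star_mul', star_star]

lemma rinner_Rn (n : ℕ) (v w : Fin 4 → ℂ) : rinner (Rn n v) (Rn n w) = rinner v w := by
  unfold rinner Rn
  congr 1
  refine Finset.sum_congr rfl fun i _ => ?_
  have h : zz i ^ n * (star (zz i))^n = 1 := by rw [star_zz, ← mul_pow, zzb, one_pow]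
  rw [star_mul', star_pow]
  linear_combination v i * star (w i) * h

lemma pev_mul (x y : Z8) (z t : ℂ) (h : z * t = 1) :
    pev x z * pev y t + pev x t * pev y z = ((x.1:ℂ)*(y.1:ℂ) + (x.2.1:ℂ)*(y.2.1:ℂ) + (x.2.2.1:ℂ)*(y.2.2.1:ℂ) + (x.2.2.2.1:ℂ)*(y.2.2.2.1:ℂ) + (x.2.2.2.2.1:ℂ)*(y.2.2.2.2.1:ℂ) + (x.2.2.2.2.2.1:ℂ)*(y.2.2.2.2.2.1:ℂ) + (x.2.2.2.2.2.2.1:ℂ)*(y.2.2.2.2.2.2.1:ℂ) + (x.2.2.2.2.2.2.2:ℂ)*(y.2.2.2.2.2.2.2:ℂ))*(z^0 + t^0) + ((x.1:ℂ)*(y.2.1:ℂ) + (x.2.1:ℂ)*(y.1:ℂ) + (x.2.1:ℂ)*(y.2.2.1:ℂ) + (x.2.2.1:ℂ)*(y.2.1:ℂ) + (x.2.2.1:ℂ)*(y.2.2.2.1:ℂ) + (x.2.2.2.1:ℂ)*(y.2.2.1:ℂ) + (x.2.2.2.1:ℂ)*(y.2.2.2.2.1:ℂ) + (x.2.2.2.2.1:ℂ)*(y.2.2.2.1:ℂ)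 + (x.2.2.2.2.1:ℂ)*(y.2.2.2.2.2.1:ℂ) + (x.2.2.2.2.2.1:ℂ)*(y.2.2.2.2.1:ℂ) + (x.2.2.2.2.2.1:ℂ)*(y.2.2.2.2.2.2.1:ℂ) + (x.2.2.2.2.2.2.1:ℂ)*(y.2.2.2.2.2.1:ℂ) + (x.2.2.2.2.2.2.1:ℂ)*(y.2.2.2.2.2.2.2:ℂ) + (x.2.2.2.2.2.2.2:ℂ)*(y.2.2.2.2.2.2.1:ℂ))*(z^1 + t^1) + ((x.1:ℂ)*(y.2.2.1:ℂ) + (x.2.1:ℂ)*(y.2.2.2.1:ℂ) + (x.2.2.1:ℂ)*(y.1:ℂ) + (x.2.2.1:ℂ)*(y.2.2.2.2.1:ℂ) + (x.2.2.2.1:ℂ)*(y.2.1:ℂ) + (x.2.2.2.1:ℂ)*(y.2.2.2.2.2.1:ℂ) + (x.2.2.2.2.1:ℂ)*(y.2.2.1:ℂ) + (x.2.2.2.2.1:ℂ)*(y.2.2.2.2.2.2.1:ℂ) + (x.2.2.2.2.2.1:ℂ)*(y.2.2.2.1:ℂ) + (x.2.2.2.2.2.1:ℂ)*(y.2.2.2.2.2.2.2:ℂ)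 + (x.2.2.2.2.2.2.1:ℂ)*(y.2.2.2.2.1:ℂ) + (x.2.2.2.2.2.2.2:ℂ)*(y.2.2.2.2.2.1:ℂ))*(z^2 + t^2) + ((x.1:ℂ)*(y.2.2.2.1:ℂ) + (x.2.1:ℂ)*(y.2.2.2.2.1:ℂ) + (x.2.2.1:ℂ)*(y.2.2.2.2.2.1:ℂ) + (x.2.2.2.1:ℂ)*(y.1:ℂ) + (x.2.2.2.1:ℂ)*(y.2.2.2.2.2.2.1:ℂ) + (x.2.2.2.2.1:ℂ)*(y.2.1:ℂ) + (x.2.2.2.2.1:ℂ)*(y.2.2.2.2.2.2.2:ℂ) + (x.2.2.2.2.2.1:ℂ)*(y.2.2.1:ℂ) + (x.2.2.2.2.2.2.1:ℂ)*(y.2.2.2.1:ℂ) + (x.2.2.2.2.2.2.2:ℂ)*(y.2.2.2.2.1:ℂ))*(z^3 + t^3) + ((x.1:ℂ)*(y.2.2.2.2.1:ℂ) + (x.2.1:ℂ)*(y.2.2.2.2.2.1:ℂ) + (x.2.2.1:ℂ)*(y.2.2.2.2.2.2.1:ℂ) + (x.2.2.2.1:ℂ)*(y.2.2.2.2.2.2.2:ℂ)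 + (x.2.2.2.2.1:ℂ)*(y.1:ℂ) + (x.2.2.2.2.2.1:ℂ)*(y.2.1:ℂ) + (x.2.2.2.2.2.2.1:ℂ)*(y.2.2.1:ℂ) + (x.2.2.2.2.2.2.2:ℂ)*(y.2.2.2.1:ℂ))*(z^4 + t^4) + ((x.1:ℂ)*(y.2.2.2.2.2.1:ℂ) + (x.2.1:ℂ)*(y.2.2.2.2.2.2.1:ℂ) + (x.2.2.1:ℂ)*(y.2.2.2.2.2.2.2:ℂ) + (x.2.2.2.2.2.1:ℂ)*(y.1:ℂ) + (x.2.2.2.2.2.2.1:ℂ)*(y.2.1:ℂ) + (x.2.2.2.2.2.2.2:ℂ)*(y.2.2.1:ℂ))*(z^5 + t^5) + ((x.1:ℂ)*(y.2.2.2.2.2.2.1:ℂ) + (x.2.1:ℂ)*(y.2.2.2.2.2.2.2:ℂ) + (x.2.2.2.2.2.2.1:ℂ)*(y.1:ℂ) + (x.2.2.2.2.2.2.2:ℂ)*(y.2.1:ℂ))*(z^6 + t^6) + ((x.1:ℂ)*(y.2.2.2.2.2.2.2:ℂ) + (x.2.2.2.2.2.2.2:ℂ)*(y.1:ℂ))*(z^7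 + t^7) := by
  have e : ∀ k : ℕ, z^k * t^k = 1 := fun k => by rw [← mul_pow, h, one_pow]
  simp only [pev]
  linear_combination ((x.2.1:ℂ)*y.2.1*(z^0 + t^0) + (x.2.1:ℂ)*y.2.2.1*(z^1 + t^1) + (x.2.1:ℂ)*y.2.2.2.1*(z^2 + t^2) + (x.2.1:ℂ)*y.2.2.2.2.1*(z^3 + t^3) + (x.2.1:ℂ)*y.2.2.2.2.2.1*(z^4 + t^4) + (x.2.1:ℂ)*y.2.2.2.2.2.2.1*(z^5 + t^5) + (x.2.1:ℂ)*y.2.2.2.2.2.2.2*(z^6 + t^6) + (x.2.2.1:ℂ)*y.2.1*(z^1 + t^1) + (x.2.2.2.1:ℂ)*y.2.1*(z^2 + t^2) + (x.2.2.2.2.1:ℂ)*y.2.1*(z^3 + t^3) + (x.2.2.2.2.2.1:ℂ)*y.2.1*(z^4 + t^4) + (x.2.2.2.2.2.2.1:ℂ)*y.2.1*(z^5 + t^5) + (x.2.2.2.2.2.2.2:ℂ)*y.2.1*(z^6 + t^6)) * e 1 + ((x.2.2.1:ℂ)*y.2.2.1*(z^0 + t^0) + (x.2.2.1:ℂ)*y.2.2.2.1*(z^1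 + t^1) + (x.2.2.1:ℂ)*y.2.2.2.2.1*(z^2 + t^2) + (x.2.2.1:ℂ)*y.2.2.2.2.2.1*(z^3 + t^3) + (x.2.2.1:ℂ)*y.2.2.2.2.2.2.1*(z^4 + t^4) + (x.2.2.1:ℂ)*y.2.2.2.2.2.2.2*(z^5 + t^5) + (x.2.2.2.1:ℂ)*y.2.2.1*(z^1 + t^1) + (x.2.2.2.2.1:ℂ)*y.2.2.1*(z^2 + t^2) + (x.2.2.2.2.2.1:ℂ)*y.2.2.1*(z^3 + t^3) + (x.2.2.2.2.2.2.1:ℂ)*y.2.2.1*(z^4 + t^4) + (x.2.2.2.2.2.2.2:ℂ)*y.2.2.1*(z^5 + t^5)) * e 2 + ((x.2.2.2.1:ℂ)*y.2.2.2.1*(z^0 + t^0) + (x.2.2.2.1:ℂ)*y.2.2.2.2.1*(z^1 + t^1) + (x.2.2.2.1:ℂ)*y.2.2.2.2.2.1*(z^2 + t^2) + (x.2.2.2.1:ℂ)*y.2.2.2.2.2.2.1*(z^3 + t^3) + (x.2.2.2.1:ℂ)*y.2.2.2.2.2.2.2*(z^4 + t^4) + (x.2.2.2.2.1:ℂ)*y.2.2.2.1*(z^1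 + t^1) + (x.2.2.2.2.2.1:ℂ)*y.2.2.2.1*(z^2 + t^2) + (x.2.2.2.2.2.2.1:ℂ)*y.2.2.2.1*(z^3 + t^3) + (x.2.2.2.2.2.2.2:ℂ)*y.2.2.2.1*(z^4 + t^4)) * e 3 + ((x.2.2.2.2.1:ℂ)*y.2.2.2.2.1*(z^0 + t^0) + (x.2.2.2.2.1:ℂ)*y.2.2.2.2.2.1*(z^1 + t^1) + (x.2.2.2.2.1:ℂ)*y.2.2.2.2.2.2.1*(z^2 + t^2) + (x.2.2.2.2.1:ℂ)*y.2.2.2.2.2.2.2*(z^3 + t^3) + (x.2.2.2.2.2.1:ℂ)*y.2.2.2.2.1*(z^1 + t^1) + (x.2.2.2.2.2.2.1:ℂ)*y.2.2.2.2.1*(z^2 + t^2) + (x.2.2.2.2.2.2.2:ℂ)*y.2.2.2.2.1*(z^3 + t^3)) * e 4 + ((x.2.2.2.2.2.1:ℂ)*y.2.2.2.2.2.1*(z^0 + t^0) + (x.2.2.2.2.2.1:ℂ)*y.2.2.2.2.2.2.1*(z^1 + t^1) + (x.2.2.2.2.2.1:ℂ)*y.2.2.2.2.2.2.2*(z^2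 + t^2) + (x.2.2.2.2.2.2.1:ℂ)*y.2.2.2.2.2.1*(z^1 + t^1) + (x.2.2.2.2.2.2.2:ℂ)*y.2.2.2.2.2.1*(z^2 + t^2)) * e 5 + ((x.2.2.2.2.2.2.1:ℂ)*y.2.2.2.2.2.2.1*(z^0 + t^0) + (x.2.2.2.2.2.2.1:ℂ)*y.2.2.2.2.2.2.2*(z^1 + t^1) + (x.2.2.2.2.2.2.2:ℂ)*y.2.2.2.2.2.2.1*(z^1 + t^1)) * e 6 + ((x.2.2.2.2.2.2.2:ℂ)*y.2.2.2.2.2.2.2*(z^0 + t^0)) * e 7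

lemma rinner_vec (x y : Z8) : 2 * rinner (vec x) (vec y) = (dot x (Gr y) : ℝ) := by
  apply Complex.ofReal_injective
  rw [two_rinner]
  have h : ∀ i, vec x i * star (vec y i) + star (vec x i) * vec y i =
      (rr i : ℂ)^2 * (pev x (zz i) * pev y (zb i) + pev x (zb i) * pev y (zz i)) := fun i => by
    simp only [vec, star_mul', star_pev]
    linear_combination (pev x (zz i) * pev y (zb i) + pev x (zb i) * pev y (zz i)) * A0_sq i
  rw [Finset.sum_congr rfl fun i _ => h i]
  simp only [fun i => pev_mul x y _ _ (zzb i)]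
  simp only [Fin.sum_univ_four, zz, zb, rr, Matrix.cons_val, dot, Gr]
  push_cast
  linear_combination ((x.1:ℂ)*(y.1:ℂ) + (x.2.1:ℂ)*(y.2.1:ℂ) + (x.2.2.1:ℂ)*(y.2.2.1:ℂ) + (x.2.2.2.1:ℂ)*(y.2.2.2.1:ℂ) + (x.2.2.2.2.1:ℂ)*(y.2.2.2.2.1:ℂ) + (x.2.2.2.2.2.1:ℂ)*(y.2.2.2.2.2.1:ℂ) + (x.2.2.2.2.2.2.1:ℂ)*(y.2.2.2.2.2.2.1:ℂ) + (x.2.2.2.2.2.2.2:ℂ)*(y.2.2.2.2.2.2.2:ℂ)) * gram0 + ((x.1:ℂ)*(y.2.1:ℂ) + (x.2.1:ℂ)*(y.1:ℂ) + (x.2.1:ℂ)*(y.2.2.1:ℂ) + (x.2.2.1:ℂ)*(y.2.1:ℂ) + (x.2.2.1:ℂ)*(y.2.2.2.1:ℂ) + (x.2.2.2.1:ℂ)*(y.2.2.1:ℂ) + (x.2.2.2.1:ℂ)*(y.2.2.2.2.1:ℂ) + (x.2.2.2.2.1:ℂ)*(y.2.2.2.1:ℂ) + (x.2.2.2.2.1:ℂ)*(y.2.2.2.2.2.1:ℂ)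 + (x.2.2.2.2.2.1:ℂ)*(y.2.2.2.2.1:ℂ) + (x.2.2.2.2.2.1:ℂ)*(y.2.2.2.2.2.2.1:ℂ) + (x.2.2.2.2.2.2.1:ℂ)*(y.2.2.2.2.2.1:ℂ) + (x.2.2.2.2.2.2.1:ℂ)*(y.2.2.2.2.2.2.2:ℂ) + (x.2.2.2.2.2.2.2:ℂ)*(y.2.2.2.2.2.2.1:ℂ)) * gram1 + ((x.1:ℂ)*(y.2.2.1:ℂ) + (x.2.1:ℂ)*(y.2.2.2.1:ℂ) + (x.2.2.1:ℂ)*(y.1:ℂ) + (x.2.2.1:ℂ)*(y.2.2.2.2.1:ℂ) + (x.2.2.2.1:ℂ)*(y.2.1:ℂ) + (x.2.2.2.1:ℂ)*(y.2.2.2.2.2.1:ℂ) + (x.2.2.2.2.1:ℂ)*(y.2.2.1:ℂ) + (x.2.2.2.2.1:ℂ)*(y.2.2.2.2.2.2.1:ℂ) + (x.2.2.2.2.2.1:ℂ)*(y.2.2.2.1:ℂ) + (x.2.2.2.2.2.1:ℂ)*(y.2.2.2.2.2.2.2:ℂ) + (x.2.2.2.2.2.2.1:ℂ)*(y.2.2.2.2.1:ℂ)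 + (x.2.2.2.2.2.2.2:ℂ)*(y.2.2.2.2.2.1:ℂ)) * gram2 + ((x.1:ℂ)*(y.2.2.2.1:ℂ) + (x.2.1:ℂ)*(y.2.2.2.2.1:ℂ) + (x.2.2.1:ℂ)*(y.2.2.2.2.2.1:ℂ) + (x.2.2.2.1:ℂ)*(y.1:ℂ) + (x.2.2.2.1:ℂ)*(y.2.2.2.2.2.2.1:ℂ) + (x.2.2.2.2.1:ℂ)*(y.2.1:ℂ) + (x.2.2.2.2.1:ℂ)*(y.2.2.2.2.2.2.2:ℂ) + (x.2.2.2.2.2.1:ℂ)*(y.2.2.1:ℂ) + (x.2.2.2.2.2.2.1:ℂ)*(y.2.2.2.1:ℂ) + (x.2.2.2.2.2.2.2:ℂ)*(y.2.2.2.2.1:ℂ)) * gram3 + ((x.1:ℂ)*(y.2.2.2.2.1:ℂ) + (x.2.1:ℂ)*(y.2.2.2.2.2.1:ℂ) + (x.2.2.1:ℂ)*(y.2.2.2.2.2.2.1:ℂ) + (x.2.2.2.1:ℂ)*(y.2.2.2.2.2.2.2:ℂ) + (x.2.2.2.2.1:ℂ)*(y.1:ℂ) + (x.2.2.2.2.2.1:ℂ)*(y.2.1:ℂ)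 + (x.2.2.2.2.2.2.1:ℂ)*(y.2.2.1:ℂ) + (x.2.2.2.2.2.2.2:ℂ)*(y.2.2.2.1:ℂ)) * gram4 + ((x.1:ℂ)*(y.2.2.2.2.2.1:ℂ) + (x.2.1:ℂ)*(y.2.2.2.2.2.2.1:ℂ) + (x.2.2.1:ℂ)*(y.2.2.2.2.2.2.2:ℂ) + (x.2.2.2.2.2.1:ℂ)*(y.1:ℂ) + (x.2.2.2.2.2.2.1:ℂ)*(y.2.1:ℂ) + (x.2.2.2.2.2.2.2:ℂ)*(y.2.2.1:ℂ)) * gram5 + ((x.1:ℂ)*(y.2.2.2.2.2.2.1:ℂ) + (x.2.1:ℂ)*(y.2.2.2.2.2.2.2:ℂ) + (x.2.2.2.2.2.2.1:ℂ)*(y.1:ℂ) + (x.2.2.2.2.2.2.2:ℂ)*(y.2.1:ℂ)) * gram6 + ((x.1:ℂ)*(y.2.2.2.2.2.2.2:ℂ) + (x.2.2.2.2.2.2.2:ℂ)*(y.1:ℂ)) * gram7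

lemma A_n (n : Fin 30) : A n = Rn n (vec (1, 0, 0, 0, 0, 0, 0, 0)) := by
  ext i
  fin_cases i
  · show (r1:ℂ) * ω^(2 * (n:ℕ)) = (ω^2)^(n:ℕ) * (pev (1, 0, 0, 0, 0, 0, 0, 0) (ω^2) * ((r1:ℂ) * ω^0))
    simp only [pev]; push_cast
    ring
  · show (r4:ℂ) * ω^(22 * (n:ℕ)) = (ω^22)^(n:ℕ) * (pev (1, 0, 0, 0, 0, 0, 0, 0) (ω^22) * ((r4:ℂ) * ω^0))
    simp only [pev]; push_cast
    ring
  · show (r6:ℂ) * ω^(14 * (n:ℕ) + 1) = (ω^14)^(n:ℕ) * (pev (1, 0, 0, 0, 0, 0, 0, 0) (ω^14) * ((r6:ℂ) * ω^1))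
    simp only [pev]; push_cast
    ring
  · show (r7:ℂ) * ω^(26 * (n:ℕ) + 1) = (ω^26)^(n:ℕ) * (pev (1, 0, 0, 0, 0, 0, 0, 0) (ω^26) * ((r7:ℂ) * ω^1))
    simp only [pev]; push_cast
    ring

lemma B_n (n : Fin 30) : B n = Rn n (vec (1, 0, -1, -1, 0, -1, 1, 1)) := by
  ext i
  fin_cases i
  · show (r2:ℂ) * ω^(2 * (n:ℕ) + 29) = (ω^2)^(n:ℕ) * (pev (1, 0, -1, -1, 0, -1, 1, 1) (ω^2) * ((r1:ℂ) * ω^0))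
    simp only [pev]; push_cast
    linear_combination (ω^2)^(n:ℕ) * eB0
  · show (r3:ℂ) * ω^(22 * (n:ℕ) + 19) = (ω^22)^(n:ℕ) * (pev (1, 0, -1, -1, 0, -1, 1, 1) (ω^22) * ((r4:ℂ) * ω^0))
    simp only [pev]; push_cast
    linear_combination (ω^22)^(n:ℕ) * eB1
  · show -((r8:ℂ) * ω^(14 * (n:ℕ) + 24)) = (ω^14)^(n:ℕ) * (pev (1, 0, -1, -1, 0, -1, 1, 1) (ω^14) * ((r6:ℂ) * ω^1))
    simp only [pev]; push_cast
    linear_combination (ω^14)^(n:ℕ) * eB2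
  · show -((r5:ℂ) * ω^(26 * (n:ℕ) + 18)) = (ω^26)^(n:ℕ) * (pev (1, 0, -1, -1, 0, -1, 1, 1) (ω^26) * ((r7:ℂ) * ω^1))
    simp only [pev]; push_cast
    linear_combination (ω^26)^(n:ℕ) * eB3

lemma C_n (n : Fin 30) : C n = Rn n (vec (-1, -1, 1, 0, 0, 1, 0, -1)) := by
  ext i
  fin_cases i
  · show (r3:ℂ) * ω^(2 * (n:ℕ) + 29) = (ω^2)^(n:ℕ) * (pev (-1, -1, 1, 0, 0, 1, 0, -1) (ω^2) * ((r1:ℂ) * ω^0))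
    simp only [pev]; push_cast
    linear_combination (ω^2)^(n:ℕ) * eC0
  · show -((r2:ℂ) * ω^(22 * (n:ℕ) + 19)) = (ω^22)^(n:ℕ) * (pev (-1, -1, 1, 0, 0, 1, 0, -1) (ω^22) * ((r4:ℂ) * ω^0))
    simp only [pev]; push_cast
    linear_combination (ω^22)^(n:ℕ) * eC1
  · show (r5:ℂ) * ω^(14 * (n:ℕ) + 24) = (ω^14)^(n:ℕ) * (pev (-1, -1, 1, 0, 0, 1, 0, -1) (ω^14) * ((r6:ℂ) * ω^1))
    simp only [pev]; push_cast
    linear_combination (ω^14)^(n:ℕ) * eC2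
  · show -((r8:ℂ) * ω^(26 * (n:ℕ) + 18)) = (ω^26)^(n:ℕ) * (pev (-1, -1, 1, 0, 0, 1, 0, -1) (ω^26) * ((r7:ℂ) * ω^1))
    simp only [pev]; push_cast
    linear_combination (ω^26)^(n:ℕ) * eC3

lemma D_n (n : Fin 30) : D n = Rn n (vec (-1, 1, 0, 0, 1, 0, -1, 0)) := by
  ext i
  fin_cases i
  · show (r4:ℂ) * ω^(2 * (n:ℕ)) = (ω^2)^(n:ℕ) * (pev (-1, 1, 0, 0, 1, 0, -1, 0) (ω^2) * ((r1:ℂ) * ω^0))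
    simp only [pev]; push_cast
    linear_combination (ω^2)^(n:ℕ) * eD0
  · show -((r1:ℂ) * ω^(22 * (n:ℕ))) = (ω^22)^(n:ℕ) * (pev (-1, 1, 0, 0, 1, 0, -1, 0) (ω^22) * ((r4:ℂ) * ω^0))
    simp only [pev]; push_cast
    linear_combination (ω^22)^(n:ℕ) * eD1
  · show (r7:ℂ) * ω^(14 * (n:ℕ) + 1) = (ω^14)^(n:ℕ) * (pev (-1, 1, 0, 0, 1, 0, -1, 0) (ω^14) * ((r6:ℂ) * ω^1))
    simp only [pev]; push_cast
    linear_combination (ω^14)^(n:ℕ) * eD2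
  · show -((r6:ℂ) * ω^(26 * (n:ℕ) + 1)) = (ω^26)^(n:ℕ) * (pev (-1, 1, 0, 0, 1, 0, -1, 0) (ω^26) * ((r7:ℂ) * ω^1))
    simp only [pev]; push_cast
    linear_combination (ω^26)^(n:ℕ) * eD3

lemma E_n (n : Fin 30) : E n = Rn n (vec (-1, 0, 1, 1, 0, 0, 0, -1)) := by
  ext i
  fin_cases i
  · show (r5:ℂ) * ω^(2 * (n:ℕ)) = (ω^2)^(n:ℕ) * (pev (-1, 0, 1, 1, 0, 0, 0, -1) (ω^2) * ((r1:ℂ) * ω^0))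
    simp only [pev]; push_cast
    linear_combination (ω^2)^(n:ℕ) * eE0
  · show (r8:ℂ) * ω^(22 * (n:ℕ)) = (ω^22)^(n:ℕ) * (pev (-1, 0, 1, 1, 0, 0, 0, -1) (ω^22) * ((r4:ℂ) * ω^0))
    simp only [pev]; push_cast
    linear_combination (ω^22)^(n:ℕ) * eE1
  · show -((r2:ℂ) * ω^(14 * (n:ℕ) + 1)) = (ω^14)^(n:ℕ) * (pev (-1, 0, 1, 1, 0, 0, 0, -1) (ω^14) * ((r6:ℂ) * ω^1))
    simp only [pev]; push_cast
    linear_combination (ω^14)^(n:ℕ) * eE2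
  · show -((r3:ℂ) * ω^(26 * (n:ℕ) + 1)) = (ω^26)^(n:ℕ) * (pev (-1, 0, 1, 1, 0, 0, 0, -1) (ω^26) * ((r7:ℂ) * ω^1))
    simp only [pev]; push_cast
    linear_combination (ω^26)^(n:ℕ) * eE3

lemma F_n (n : Fin 30) : F n = Rn n (vec (0, 1, -1, 0, -1, 0, 0, 1)) := by
  ext i
  fin_cases i
  · show (r6:ℂ) * ω^(2 * (n:ℕ) + 29) = (ω^2)^(n:ℕ) * (pev (0, 1, -1, 0, -1, 0, 0, 1) (ω^2) * ((r1:ℂ) * ω^0))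
    simp only [pev]; push_cast
    linear_combination (ω^2)^(n:ℕ) * eF0
  · show (r7:ℂ) * ω^(22 * (n:ℕ) + 19) = (ω^22)^(n:ℕ) * (pev (0, 1, -1, 0, -1, 0, 0, 1) (ω^22) * ((r4:ℂ) * ω^0))
    simp only [pev]; push_cast
    linear_combination (ω^22)^(n:ℕ) * eF1
  · show (r4:ℂ) * ω^(14 * (n:ℕ) + 24) = (ω^14)^(n:ℕ) * (pev (0, 1, -1, 0, -1, 0, 0, 1) (ω^14) * ((r6:ℂ) * ω^1))
    simp only [pev]; push_cast
    linear_combination (ω^14)^(n:ℕ) * eF2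
  · show (r1:ℂ) * ω^(26 * (n:ℕ) + 18) = (ω^26)^(n:ℕ) * (pev (0, 1, -1, 0, -1, 0, 0, 1) (ω^26) * ((r7:ℂ) * ω^1))
    simp only [pev]; push_cast
    linear_combination (ω^26)^(n:ℕ) * eF3

lemma G_n (n : Fin 30) : G n = Rn n (vec (-1, -1, 0, 1, 1, 1, -1, -1)) := by
  ext i
  fin_cases i
  · show (r7:ℂ) * ω^(2 * (n:ℕ) + 29) = (ω^2)^(n:ℕ) * (pev (-1, -1, 0, 1, 1, 1, -1, -1) (ω^2) * ((r1:ℂ) * ω^0))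
    simp only [pev]; push_cast
    linear_combination (ω^2)^(n:ℕ) * eG0
  · show -((r6:ℂ) * ω^(22 * (n:ℕ) + 19)) = (ω^22)^(n:ℕ) * (pev (-1, -1, 0, 1, 1, 1, -1, -1) (ω^22) * ((r4:ℂ) * ω^0))
    simp only [pev]; push_cast
    linear_combination (ω^22)^(n:ℕ) * eG1
  · show -((r1:ℂ) * ω^(14 * (n:ℕ) + 24)) = (ω^14)^(n:ℕ) * (pev (-1, -1, 0, 1, 1, 1, -1, -1) (ω^14) * ((r6:ℂ) * ω^1))
    simp only [pev]; push_cast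
    linear_combination (ω^14)^(n:ℕ) * eG2
  · show (r4:ℂ) * ω^(26 * (n:ℕ) + 18) = (ω^26)^(n:ℕ) * (pev (-1, -1, 0, 1, 1, 1, -1, -1) (ω^26) * ((r7:ℂ) * ω^1))
    simp only [pev]; push_cast
    linear_combination (ω^26)^(n:ℕ) * eG3

lemma H_n (n : Fin 30) : H n = Rn n (vec (1, 1, 0, -1, -1, -1, 0, 2)) := by
  ext i
  fin_cases i
  · show (r8:ℂ) * ω^(2 * (n:ℕ)) = (ω^2)^(n:ℕ) * (pev (1, 1, 0, -1, -1, -1, 0, 2) (ω^2) * ((r1:ℂ) * ω^0))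
    simp only [pev]; push_cast
    linear_combination (ω^2)^(n:ℕ) * eH0
  · show -((r5:ℂ) * ω^(22 * (n:ℕ))) = (ω^22)^(n:ℕ) * (pev (1, 1, 0, -1, -1, -1, 0, 2) (ω^22) * ((r4:ℂ) * ω^0))
    simp only [pev]; push_cast
    linear_combination (ω^22)^(n:ℕ) * eH1
  · show -((r3:ℂ) * ω^(14 * (n:ℕ) + 1)) = (ω^14)^(n:ℕ) * (pev (1, 1, 0, -1, -1, -1, 0, 2) (ω^14) * ((r6:ℂ) * ω^1))
    simp only [pev]; push_cast
    linear_combination (ω^14)^(n:ℕ) * eH2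
  · show (r2:ℂ) * ω^(26 * (n:ℕ) + 1) = (ω^26)^(n:ℕ) * (pev (1, 1, 0, -1, -1, -1, 0, 2) (ω^26) * ((r7:ℂ) * ω^1))
    simp only [pev]; push_cast
    linear_combination (ω^26)^(n:ℕ) * eH3


lemma S_of {p : Z8} (hp : p ∈ PG) (n : ℕ) : Rn n (vec p) ∈ S := by
  rw [← Rn_mod]
  refine ⟨⟨n % 30, Nat.mod_lt _ (by norm_num)⟩, ?_⟩
  simp only [PG, List.mem_cons, List.not_mem_nil, or_false] at hp
  simp only [A_n, B_n, C_n, D_n, E_n, F_n, G_n, H_n]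
  rcases hp with rfl|rfl|rfl|rfl|rfl|rfl|rfl|rfl <;> simp

lemma of_S {v : Fin 4 → ℂ} (hv : v ∈ S) : ∃ p ∈ PG, ∃ n : ℕ, n < 30 ∧ v = Rn n (vec p) := by
  obtain ⟨n, h⟩ := hv
  rcases h with rfl|rfl|rfl|rfl|rfl|rfl|rfl|rfl
  · exact ⟨_, List.getElem_mem (l := PG) (n := 0) (by decide), n, n.2, A_n n⟩
  · exact ⟨_, List.getElem_mem (l := PG) (n := 1) (by decide), n, n.2, B_n n⟩
  · exact ⟨_, List.getElem_mem (l := PG) (n := 2) (by decide), n, n.2, C_n n⟩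
  · exact ⟨_, List.getElem_mem (l := PG) (n := 3) (by decide), n, n.2, D_n n⟩
  · exact ⟨_, List.getElem_mem (l := PG) (n := 4) (by decide), n, n.2, E_n n⟩
  · exact ⟨_, List.getElem_mem (l := PG) (n := 5) (by decide), n, n.2, F_n n⟩
  · exact ⟨_, List.getElem_mem (l := PG) (n := 6) (by decide), n, n.2, G_n n⟩
  · exact ⟨_, List.getElem_mem (l := PG) (n := 7) (by decide), n, n.2, H_n n⟩


lemma S_Rn {v : Fin 4 → ℂ} (hv : v ∈ S) (n : ℕ) : Rn n v ∈ S := by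
  obtain ⟨p, hp, m, -, rfl⟩ := of_S hv
  rw [Rn_Rn]
  exact S_of hp _

def Inv (v : Fin 4 → ℂ) : Prop := ∀ w ∈ S, w - (2 * rinner w v) • v ∈ S

lemma Inv_Rn {v : Fin 4 → ℂ} (hv : Inv v) (n : ℕ) : Inv (Rn n v) := by
  intro w hw
  have e : w = Rn n (Rn (29 * n) w) := by
    rw [Rn_Rn, ← Rn_mod, show (n + 29 * n) % 30 = 0 by omega]
    ext i; simp [Rn]
  rw [e, rinner_Rn]
  have h := S_Rn (hv _ (S_Rn hw (29 * n))) n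
  convert h using 1
  ext i
  simp only [Rn, Pi.sub_apply, Pi.smul_apply, Complex.real_smul]
  ring

lemma rinner_comm (v w : Fin 4 → ℂ) : rinner v w = rinner w v := by
  simp only [rinner, Fin.sum_univ_four, Complex.add_re, Complex.mul_re, Complex.star_def,
    Complex.conj_re, Complex.conj_im]
  ring

lemma rinner_lin (v w x : Fin 4 → ℂ) (t : ℝ) : rinner (v - t • w) x = rinner v x - t * rinner w x := by
  simp only [rinner, Fin.sum_univ_four, Complex.add_re, Complex.mul_re, Complex.star_def,
    Complex.conj_re, Complex.conj_im, Pi.sub_apply, Pi.smul_apply, Complex.sub_re, Complex.sub_im,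
    Complex.smul_re, Complex.smul_im, smul_eq_mul]
  ring

lemma rinner_lin' (v w x : Fin 4 → ℂ) (t : ℝ) : rinner x (v - t • w) = rinner x v - t * rinner x w := by
  rw [rinner_comm, rinner_lin, rinner_comm v, rinner_comm w]

/-- Conjugating a reflection by a reflection. -/
lemma Inv_refl {u v : Fin 4 → ℂ} (h1 : rinner u u = 1) (hu : Inv u) (hv : Inv v) :
    Inv (v - (2 * rinner v u) • u) := by
  intro w hw
  have h := hu _ (hv _ (hu w hw))
  convert h using 1
  simp only [rinner_lin, rinner_lin', h1, rinner_comm u v]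
  ext i
  simp only [Pi.sub_apply, Pi.smul_apply, Complex.real_smul]
  push_cast
  ring

lemma vec_sub (x y : Z8) (t : ℤ) : vec x - (t : ℝ) • vec y = vec (sub x t y) := by
  ext i
  simp only [vec, pev, sub, Pi.sub_apply, Pi.smul_apply, Complex.real_smul]
  push_cast
  ring

lemma Inv_A : Inv (vec pA) := by
  intro w hw
  obtain ⟨q, hq, m, hm, rfl⟩ := of_S hw
  rw [Rn_iter, rinner_vec, vec_sub]
  have hx : M^[m] q ∈ L := by
    simp only [L, List.mem_flatMap, List.mem_map, List.mem_range]
    exact ⟨m, hm, q, hq, rfl⟩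
  have hc := check
  rw [List.all_eq_true] at hc
  have hc := hc _ hx
  rw [List.contains_iff_mem] at hc
  simp only [L, List.mem_flatMap, List.mem_map, List.mem_range] at hc
  obtain ⟨j, -, s, hs, he⟩ := hc
  rw [← he, ← Rn_iter]
  exact S_of hs _

lemma step {y : Z8} (hy : Inv (vec y)) (j k : ℕ) (x : Z8)
    (h : sub (M^[j] y) (dot (M^[j] y) (Gr (M^[k] pA))) (M^[k] pA) = x) : Inv (vec x) := by
  have hA := Inv_Rn Inv_A k
  have hY := Inv_Rn hy j
  have h1 : rinner (vec pA) (vec pA) = 1 := by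
    have := rinner_vec pA pA
    rw [show dot pA (Gr pA) = 2 by rfl] at this
    push_cast at this
    linarith
  have := Inv_refl (by rw [rinner_Rn, h1]) hA hY
  rw [Rn_iter, Rn_iter, rinner_vec, vec_sub, h] at this
  exact this

lemma Inv_all {p : Z8} (hp : p ∈ PG) : Inv (vec p) := by
  have hA : Inv (vec (1, 0, 0, 0, 0, 0, 0, 0)) := Inv_A
  have hB : Inv (vec (1, 0, -1, -1, 0, -1, 1, 1)) := step hA 9 5 _ rfl
  have hC : Inv (vec (-1, -1, 1, 0, 0, 1, 0, -1)) := step hB 7 10 _ rfl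
  have hD : Inv (vec (-1, 1, 0, 0, 1, 0, -1, 0)) := step hB 6 4 _ rfl
  have hE : Inv (vec (-1, 0, 1, 1, 0, 0, 0, -1)) := step hA 6 9 _ rfl
  have hF : Inv (vec (0, 1, -1, 0, -1, 0, 0, 1)) := step hB 8 10 _ rfl
  have hG : Inv (vec (-1, -1, 0, 1, 1, 1, -1, -1)) := step hA 8 6 _ rfl
  have hH : Inv (vec (1, 1, 0, -1, -1, -1, 0, 2)) := step hA 7 8 _ rfl
  simp only [PG, List.mem_cons, List.not_mem_nil, or_false] at hp
  rcases hp with rfl|rfl|rfl|rfl|rfl|rfl|rfl|rfl <;> assumption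

/-- S is closed under reflections in its elements. -/
theorem stmt10 : ∀ v ∈ S, ∀ w ∈ S, w - (2 * rinner w v) • v ∈ S := by
  intro v hv
  obtain ⟨p, hp, n, -, rfl⟩ := of_S hv
  exact Inv_Rn (Inv_all hp) n

end Triacontagonal
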